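/- Comparison principle: Assume (H1)–(H3). Let U : [0,T]×ℝⁿ → ℝ be a bounded upper semicontinuous viscosity subsolution of equation (HJB1), and let V : [0,T]×ℝⁿ → ℝ be a bounded lower semicontinuous viscosity supersolution of equation (HJB1). Then U(t,x) ≤ V(t,x) for all (t,x) ∈ [0,T]×ℝⁿ. -/

import Mathlib

open scoped BigOperators RealInnerProductSpace
open Filter Matrix Set Topology

noncomputable section

/-- Euclidean state space ℝⁿ. -/
abbrev EucSp (n : ℕ) := EuclideanSpace ℝ (Fin n)

variable {n d : ℕ}

/-- The parabolic domain `[0, T) × ℝⁿ`. -/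
def pdom (T : ℝ) (n : ℕ) : Set (ℝ × EucSp n) := Set.Ico (0 : ℝ) T ×ˢ (Set.univ : Set (EucSp n))

/-- Time derivative `∂ₜφ(t,x)`. -/
def tderiv (φ : ℝ → EucSp n → ℝ) (t : ℝ) (x : EucSp n) : ℝ :=
  deriv (fun s => φ s x) t

/-- Spatial gradient `∇ₓφ(t,x)`. -/
def xgrad (φ : ℝ → EucSp n → ℝ) (t : ℝ) (x : EucSp n) : EucSp n :=
  gradient (fun y => φ t y) x

/-- Spatial Hessian matrix `∇ₓ²φ(t,x)`. -/
def xhess (φ : ℝ → EucSp n → ℝ) (t : ℝ) (x : EucSp n) : Matrix (Fin n) (Fin n) ℝ :=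
  fun i j => fderiv ℝ (fun y => xgrad φ t y) x (EuclideanSpace.single j 1) i

/-- The second order operator `Lφ(t,x) = ⟨b, ∇ₓφ⟩ + ½ tr[σσᵀ ∇ₓ²φ]`. -/
def Lop (b : ℝ → EucSp n → EucSp n) (σ : ℝ → EucSp n → Matrix (Fin n) (Fin d) ℝ)
    (φ : ℝ → EucSp n → ℝ) (t : ℝ) (x : EucSp n) : ℝ :=
  ⟪b t x, xgrad φ t x⟫ + (1 / 2) * (σ t x * (σ t x)ᵀ * xhess φ t x).trace

/-- `φ` is of class `C^{1,2}` on the set `s`. -/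
structure IsC12On (φ : ℝ → EucSp n → ℝ) (s : Set (ℝ × EucSp n)) : Prop where
  cont : ContinuousOn (fun p : ℝ × EucSp n => φ p.1 p.2) s
  diff_t : ∀ p ∈ s, DifferentiableAt ℝ (fun t => φ t p.2) p.1
  cont_t : ContinuousOn (fun p : ℝ × EucSp n => tderiv φ p.1 p.2) s
  diff_x : ∀ p ∈ s, DifferentiableAt ℝ (fun y => φ p.1 y) p.2
  diff_grad : ∀ p ∈ s, DifferentiableAt ℝ (fun y => xgrad φ p.1 y) p.2
  cont_grad : ContinuousOn (fun p : ℝ × EucSp n => xgrad φ p.1 p.2) s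
  cont_hess : ContinuousOn (fun p : ℝ × EucSp n => xhess φ p.1 p.2) s

/-- The intervention operator `(MW)(t,x) = sup_{ξ∈K} [W(t,x+ξ) − c(t,x,ξ)]`. -/
def Mop (K : Set (EucSp n)) (c : ℝ → EucSp n → EucSp n → ℝ) (W : ℝ → EucSp n → ℝ)
    (t : ℝ) (x : EucSp n) : ℝ :=
  sSup ((fun ξ => W t (x + ξ) - c t x ξ) '' K)

/-- The intervention operator `(M̃W)(t,x) = sup_{ξ∈K} [W(t,x+ξ) − e^t c(t,x,ξ)]`. -/
def Mtop (K : Set (EucSp n)) (c : ℝ → EucSp n → EucSp n → ℝ) (W : ℝ → EucSp n → ℝ)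
    (t : ℝ) (x : EucSp n) : ℝ :=
  sSup ((fun ξ => W t (x + ξ) - Real.exp t * c t x ξ) '' K)

/-- Upper semicontinuous envelope, limits taken with `s < T`. -/
def uscEnvT (T : ℝ) (W : ℝ → EucSp n → ℝ) (t : ℝ) (x : EucSp n) : ℝ :=
  limsup (fun p : ℝ × EucSp n => W p.1 p.2) (𝓝[{p : ℝ × EucSp n | p.1 < T}] (t, x))

/-- Lower semicontinuous envelope, limits taken with `s < T`. -/
def lscEnvT (T : ℝ) (W : ℝ → EucSp n → ℝ) (t : ℝ) (x : EucSp n) : ℝ :=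
  liminf (fun p : ℝ × EucSp n => W p.1 p.2) (𝓝[{p : ℝ × EucSp n | p.1 < T}] (t, x))

/-- Quadratic form `⟨Xv, v⟩` of a matrix. -/
def qform (X : Matrix (Fin n) (Fin n) ℝ) (v : EucSp n) : ℝ :=
  ∑ i, ∑ j, X i j * v j * v i

/-- Parabolic subjet membership: `(p,q,X) ∈ J^{2,−}V(t,x)`. -/
def InSubjet (V : ℝ → EucSp n → ℝ) (t : ℝ) (x : EucSp n)
    (p : ℝ) (q : EucSp n) (X : Matrix (Fin n) (Fin n) ℝ) : Prop :=
  X.IsSymm ∧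
  ∀ ε > (0 : ℝ), ∀ᶠ sy : ℝ × EucSp n in 𝓝 (t, x),
    V sy.1 sy.2 ≥ V t x + p * (sy.1 - t) + ⟪q, sy.2 - x⟫
      + (1 / 2) * qform X (sy.2 - x) - ε * (|sy.1 - t| + ‖sy.2 - x‖ ^ 2)

/-- Parabolic superjet membership: `(p,q,X) ∈ J^{2,+}V(t,x)`. -/
def InSuperjet (V : ℝ → EucSp n → ℝ) (t : ℝ) (x : EucSp n)
    (p : ℝ) (q : EucSp n) (X : Matrix (Fin n) (Fin n) ℝ) : Prop :=
  X.IsSymm ∧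
  ∀ ε > (0 : ℝ), ∀ᶠ sy : ℝ × EucSp n in 𝓝 (t, x),
    V sy.1 sy.2 ≤ V t x + p * (sy.1 - t) + ⟪q, sy.2 - x⟫
      + (1 / 2) * qform X (sy.2 - x) + ε * (|sy.1 - t| + ‖sy.2 - x‖ ^ 2)

/-- Viscosity subsolution of equation (HJB1). -/
def IsSubHJB1 (T : ℝ) (b : ℝ → EucSp n → EucSp n) (σ : ℝ → EucSp n → Matrix (Fin n) (Fin d) ℝ)
    (f : ℝ → EucSp n → ℝ) (g : EucSp n → ℝ) (K : Set (EucSp n))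
    (c : ℝ → EucSp n → EucSp n → ℝ) (U : ℝ → EucSp n → ℝ) : Prop :=
  (∀ t₀ x₀, (t₀, x₀) ∈ pdom T n → ∀ φ : ℝ → EucSp n → ℝ, IsC12On φ (pdom T n) →
    IsLocalMaxOn (fun p : ℝ × EucSp n => U p.1 p.2 - φ p.1 p.2) (pdom T n) (t₀, x₀) →
    min (U t₀ x₀ - tderiv φ t₀ x₀ - Lop b σ φ t₀ x₀ - Real.exp t₀ * f t₀ x₀)
        (U t₀ x₀ - Mtop K c U t₀ x₀) ≤ 0) ∧
  (∀ x, U T x ≤ Real.exp T * g x)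

/-- Viscosity supersolution of equation (HJB1). -/
def IsSuperHJB1 (T : ℝ) (b : ℝ → EucSp n → EucSp n) (σ : ℝ → EucSp n → Matrix (Fin n) (Fin d) ℝ)
    (f : ℝ → EucSp n → ℝ) (g : EucSp n → ℝ) (K : Set (EucSp n))
    (c : ℝ → EucSp n → EucSp n → ℝ) (V : ℝ → EucSp n → ℝ) : Prop :=
  (∀ t₀ x₀, (t₀, x₀) ∈ pdom T n → ∀ φ : ℝ → EucSp n → ℝ, IsC12On φ (pdom T n) →
    IsLocalMinOn (fun p : ℝ × EucSp n => V p.1 p.2 - φ p.1 p.2) (pdom T n) (t₀, x₀) →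
    0 ≤ min (V t₀ x₀ - tderiv φ t₀ x₀ - Lop b σ φ t₀ x₀ - Real.exp t₀ * f t₀ x₀)
        (V t₀ x₀ - Mtop K c V t₀ x₀)) ∧
  (∀ x, Real.exp T * g x ≤ V T x)

/-!
Suppose `U > V` somewhere. For `0 < l < 1` and a large constant `C`, the function `(1 - l) V + l C`
is still a supersolution, and it satisfies the intervention inequality with slack `l k`, because
intervening never costs less than `k`. It therefore suffices to compare `U` with a supersolution
having positive slack, and then to let `l → 0`.

Penalizing by `β ‖x‖²` and doubling the variables yields nearly maximal pairs `q`, `w` arbitrarily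
close to each other, with superjets of `U` at `q` and of `-V` at `w` whose contributions to the
equations nearly cancel, since the coefficients are Lipschitz. The shifts by `ξ ∈ K` of the pair are
also almost no better than the pair itself, so the slack excludes the intervention alternative at
`q`. The two differential inequalities then bound `U q - V w` by a small error, while it is bounded
below by half of the assumed positive gap: a contradiction.

Time is doubled as an ordinary variable with a much stronger penalty, so that the coefficients at
`q` and `w` may be compared although they are merely continuous in time. The superjets come from the
theorem on sums, for which a semicontinuous function is replaced by the inf-convolution of its
sup-convolution. This regularization is `C^{1,1}`, so Jensen's lemma needs no Alexandrov theorem: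
Rademacher's theorem for its gradient is enough.
-/

/-! ### Second order expansions -/

section QuadraticSupport

variable {E : Type*} [NormedAddCommGroup E] [InnerProductSpace ℝ E]

/-- `R` is differentiable with gradient field `q`, and the first order Taylor remainder is bounded
globally by `c ‖h‖²`; equivalently `R` is `C^{1,1}`. -/
def HasQuadraticRemainder (R : E → ℝ) (q : E → E) (c : ℝ) : Prop :=
  ∀ x h, |R (x + h) - R x - ⟪q x, h⟫| ≤ c * ‖h‖ ^ 2

/-- Second order Taylor expansion of `R` at `x` with gradient `q` and Hessian `X`. The Hessian is
only used through its quadratic form, so it is not required to be symmetric. -/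
def HasSecondOrderTaylorAt (R : E → ℝ) (q : E) (X : E →L[ℝ] E) (x : E) : Prop :=
  ∀ ε > 0, ∀ᶠ h in 𝓝 (0 : E),
    |R (x + h) - R x - ⟪q, h⟫ - 1 / 2 * ⟪X h, h⟫| ≤ ε * ‖h‖ ^ 2

/-- `(q, X)` belongs, up to the quadratic error `δ`, to the second order superjet at `x` of `u`
restricted to `O`. -/
def IsApproxSuperjet (u : E → ℝ) (O : Set E) (δ : ℝ) (x q : E) (X : E →L[ℝ] E) : Prop :=
  ∀ᶠ h in 𝓝 (0 : E), x + h ∈ O →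
    u (x + h) ≤ u x + ⟪q, h⟫ + 1 / 2 * ⟪X h, h⟫ + δ * ‖h‖ ^ 2

lemma norm_smul_sq (t : ℝ) (h : E) : ‖t • h‖ ^ 2 = t ^ 2 * ‖h‖ ^ 2 := by
  rw [norm_smul, mul_pow, Real.norm_eq_abs, sq_abs]

lemma norm_add_sq_le_two_mul (x y : E) : ‖x + y‖ ^ 2 ≤ 2 * ‖x‖ ^ 2 + 2 * ‖y‖ ^ 2 := by
  linarith [parallelogram_law_with_norm ℝ x y, sq_nonneg ‖x - y‖]

lemma norm_sub_sq_le_two_mul (x y : E) : ‖x - y‖ ^ 2 ≤ 2 * ‖x‖ ^ 2 + 2 * ‖y‖ ^ 2 := by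
  linarith [parallelogram_law_with_norm ℝ x y, sq_nonneg ‖x + y‖]

lemma tendsto_smul_nhdsGT_zero (h : E) : Tendsto (fun t : ℝ => t • h) (𝓝[>] 0) (𝓝 0) := by
  have hcont : Continuous fun t : ℝ => t • h := by fun_prop
  simpa only [zero_smul] using (hcont.tendsto 0).mono_left nhdsWithin_le_nhds

lemma le_of_forall_le_add_mul {A B C : ℝ} (h : ∀ t, 0 < t → t < 1 → A ≤ B + t * C) : A ≤ B := by
  have hlim : Tendsto (fun t : ℝ => B + t * C) (𝓝[>] 0) (𝓝 (B + 0 * C)) :=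
    Tendsto.mono_left (Continuous.tendsto (by fun_prop) 0) nhdsWithin_le_nhds
  rw [zero_mul, add_zero] at hlim
  exact ge_of_tendsto hlim
    (mem_of_superset (Ioo_mem_nhdsGT zero_lt_one) fun t ht => h t ht.1 ht.2)

lemma eq_zero_of_eventually_inner_le {w : E} {C : ℝ}
    (h : ∀ᶠ k in 𝓝 (0 : E), ⟪w, k⟫ ≤ C * ‖k‖ ^ 2) : w = 0 := by
  have hray : ∀ᶠ t : ℝ in 𝓝[>] 0, ‖w‖ ^ 2 ≤ t * (C * ‖w‖ ^ 2) := by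
    filter_upwards [(tendsto_smul_nhdsGT_zero w).eventually h, self_mem_nhdsWithin] with t ht htpos
    rw [real_inner_smul_right, real_inner_self_eq_norm_sq, norm_smul_sq] at ht
    exact le_of_mul_le_mul_left (by linarith) htpos
  have hlim : Tendsto (fun t : ℝ => t * (C * ‖w‖ ^ 2)) (𝓝[>] 0) (𝓝 0) := by
    simpa only [smul_eq_mul] using tendsto_smul_nhdsGT_zero (C * ‖w‖ ^ 2)
  have hsq : ‖w‖ ^ 2 ≤ 0 := ge_of_tendsto hlim hray
  exact norm_eq_zero.1 (pow_eq_zero_iff two_ne_zero |>.1 (le_antisymm hsq (by positivity)))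

lemma concaveOn_sub_sq_of_forall_le {R : E → ℝ} {q : E → E} {b : ℝ}
    (hup : ∀ x h, R (x + h) ≤ R x + ⟪q x, h⟫ + b / 2 * ‖h‖ ^ 2) (w : E) :
    ConcaveOn ℝ univ fun x => R x - b / 2 * ‖x - w‖ ^ 2 := by
  have hsupport : ∀ z x, R x - b / 2 * ‖x - w‖ ^ 2 ≤
      R z - b / 2 * ‖z - w‖ ^ 2 + ⟪q z - b • (z - w), x - z⟫ := by
    intro z x
    have h := hup z (x - z)
    have hnorm := norm_add_sq_real (z - w) (x - z)
    rw [add_sub_cancel] at h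
    rw [sub_add_sub_cancel' z w x] at hnorm
    rw [hnorm, inner_sub_left (q z), real_inner_smul_left]
    linarith
  refine ⟨convex_univ, fun x _ y _ s t hs ht hst => ?_⟩
  set z := s • x + t • y
  have hbary : s * ⟪q z - b • (z - w), x - z⟫ + t * ⟪q z - b • (z - w), y - z⟫ = 0 := by
    rw [← real_inner_smul_right, ← real_inner_smul_right, ← inner_add_right]
    have : s • (x - z) + t • (y - z) = 0 := by
      rw [smul_sub, smul_sub, sub_add_sub_comm, ← add_smul, hst, one_smul, sub_self]
    rw [this, inner_zero_right]
  have hx := mul_le_mul_of_nonneg_left (hsupport z x) hs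
  have hy := mul_le_mul_of_nonneg_left (hsupport z y) ht
  simp only [smul_eq_mul]
  calc s * (R x - b / 2 * ‖x - w‖ ^ 2) + t * (R y - b / 2 * ‖y - w‖ ^ 2)
      ≤ (s + t) * (R z - b / 2 * ‖z - w‖ ^ 2) := by linarith
    _ = R z - b / 2 * ‖z - w‖ ^ 2 := by rw [hst, one_mul]

lemma concaveOn_le_of_le_on_sphere {F : E → ℝ} (hF : ConcaveOn ℝ univ F) {r A : ℝ} (hr : 0 < r)
    (hsphere : ∀ h, ‖h‖ = r → F h ≤ F 0) (hball : ∀ h, ‖h‖ ≤ r → F h ≤ A) (h : E) : F h ≤ A := by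
  rcases le_or_gt ‖h‖ r with hh | hh
  · exact hball h hh
  have hpos : 0 < ‖h‖ := hr.trans hh
  set θ := r / ‖h‖
  have hθ : 0 < θ := by positivity
  have hθ1 : θ ≤ 1 := (div_le_one hpos).2 hh.le
  have hnorm : ‖θ • h‖ = r := by
    rw [norm_smul, Real.norm_of_nonneg hθ.le, div_mul_cancel₀ r hpos.ne']
  have hconc := hF.2 (mem_univ 0) (mem_univ h) (sub_nonneg.2 hθ1) hθ.le (by ring)
  rw [smul_zero, zero_add, smul_eq_mul, smul_eq_mul] at hconc
  have hle : θ * F h ≤ θ * F 0 := by linarith [hsphere _ hnorm]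
  exact (le_of_mul_le_mul_left hle hθ).trans (hball 0 (by simpa using hr.le))

lemma inner_add_inner_le_of_abs_le {X : E →L[ℝ] E} {c : ℝ}
    (hX : ∀ h, |⟪X h, h⟫| ≤ c * ‖h‖ ^ 2) {s : ℝ} (hs : 0 < s) (k m : E) :
    ⟪X k, m⟫ + ⟪X m, k⟫ ≤ c * (s * ‖k‖ ^ 2 + ‖m‖ ^ 2 / s) := by
  have hplus := (abs_le.1 (hX (s • k + m))).2
  have hminus := (abs_le.1 (hX (s • k - m))).1
  have hpar := parallelogram_law_with_norm ℝ (s • k) m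
  rw [norm_smul_sq] at hpar
  simp only [map_add, map_sub, map_smul, inner_add_left, inner_add_right, inner_sub_left,
    inner_sub_right, real_inner_smul_left, real_inner_smul_right] at hplus hminus
  have hcross : s * (⟪X k, m⟫ + ⟪X m, k⟫) ≤ s * (c * (s * ‖k‖ ^ 2 + ‖m‖ ^ 2 / s)) := by
    have : s * (c * (s * ‖k‖ ^ 2 + ‖m‖ ^ 2 / s)) =
        c / 2 * (2 * (s ^ 2 * ‖k‖ ^ 2 + ‖m‖ ^ 2)) := by field_simp
    rw [this, ← hpar]
    linarith
  exact le_of_mul_le_mul_left hcross hs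

lemma quadratic_sub_sq_le {X : E →L[ℝ] E} {b c δ ε : ℝ} (hc : 0 < c) (hδ : 0 < δ) (hε : 0 ≤ ε)
    (hε1 : ε ≤ 1 / 2) (hεδ : ε ≤ δ / 4) (hb : 2 * c + 2 + c ^ 2 / δ ≤ b)
    (hX : ∀ h, |⟪X h, h⟫| ≤ c * ‖h‖ ^ 2) (h k : E) :
    1 / 2 * ⟪X h, h⟫ + ε * ‖h‖ ^ 2 - b / 2 * ‖h - k‖ ^ 2 ≤ 1 / 2 * ⟪X k, k⟫ + δ * ‖k‖ ^ 2 := by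
  obtain ⟨m, rfl⟩ : ∃ m, h = k + m := ⟨h - k, by abel⟩
  have hcross : ⟪X k, m⟫ + ⟪X m, k⟫ ≤ δ * ‖k‖ ^ 2 + c ^ 2 / δ * ‖m‖ ^ 2 := by
    convert inner_add_inner_le_of_abs_le hX (div_pos hδ hc) k m using 1
    field_simp
  have hm := (abs_le.1 (hX m)).2
  have hexpand : ⟪X (k + m), k + m⟫ = ⟪X k, k⟫ + (⟪X k, m⟫ + ⟪X m, k⟫) + ⟪X m, m⟫ := by
    simp only [map_add, inner_add_left, inner_add_right]
    ring
  have hsum := mul_le_mul_of_nonneg_left (norm_add_sq_le_two_mul k m) hε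
  have hεk := mul_le_mul_of_nonneg_right hεδ (sq_nonneg ‖k‖)
  have hεm := mul_le_mul_of_nonneg_right hε1 (sq_nonneg ‖m‖)
  have hbm := mul_le_mul_of_nonneg_right hb (sq_nonneg ‖m‖)
  rw [add_sub_cancel_left, hexpand]
  linarith [mul_nonneg hc.le (sq_nonneg ‖m‖)]

/-- The quadratic form of the sup-convolution is `X (1 - X / b)⁻¹`, which differs from `X` by at
most `δ` for large `b`; concavity of `R - b ‖· - k‖² / 2` makes the local expansion sufficient. -/
lemma eventually_forall_sub_sq_le {R : E → ℝ} {q : E → E} {X : E →L[ℝ] E} {b c δ : ℝ}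
    (hc : 0 < c) (hδ : 0 < δ) (hb : 2 * c + 2 + c ^ 2 / δ ≤ b)
    (hup : ∀ x h, R (x + h) ≤ R x + ⟪q x, h⟫ + b / 2 * ‖h‖ ^ 2)
    (hX : ∀ h, |⟪X h, h⟫| ≤ c * ‖h‖ ^ 2) {x : E}
    (hR : HasSecondOrderTaylorAt R (q x) X x) :
    ∀ᶠ k in 𝓝 (0 : E), ∀ h, R (x + h) - R x - ⟪q x, h⟫ - b / 2 * ‖h - k‖ ^ 2 ≤
      1 / 2 * ⟪X k, k⟫ + δ * ‖k‖ ^ 2 := by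
  set P : E → ℝ := fun h => R (x + h) - R x - ⟪q x, h⟫ with hPdef
  have hPup : ∀ y h, P (y + h) ≤ P y + ⟪q (x + y) - q x, h⟫ + b / 2 * ‖h‖ ^ 2 := by
    intro y h
    have := hup (x + y) h
    simp only [hPdef, inner_add_right, inner_sub_left, ← add_assoc]
    linarith
  set ε := min (1 / 2) (δ / 4)
  have hε : 0 < ε := by positivity
  have hε1 : ε ≤ 1 / 2 := min_le_left _ _
  obtain ⟨r₀, hr₀, hball⟩ := Metric.eventually_nhds_iff.1 (hR ε hε)
  set r := r₀ / 2 with hrdef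
  have hr : 0 < r := by positivity
  have hPle : ∀ h, ‖h‖ ≤ r → P h ≤ 1 / 2 * ⟪X h, h⟫ + ε * ‖h‖ ^ 2 := by
    intro h hh
    have := (abs_le.1 (hball (y := h) (by rw [dist_zero_right]; linarith))).2
    linarith
  have hfrac : 0 ≤ c ^ 2 / δ := by positivity
  rw [Metric.eventually_nhds_iff]
  refine ⟨r / 4, by positivity, fun k hk h => ?_⟩
  rw [dist_zero_right] at hk
  refine concaveOn_le_of_le_on_sphere (concaveOn_sub_sq_of_forall_le hPup k) hr ?_ ?_ h
  · intro h hh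
    have hinner : b * ⟪h, k⟫ ≤ b * (r * (r / 4)) := by
      have := real_inner_le_norm h k
      rw [hh] at this
      gcongr
      · linarith
      · exact this.trans (by gcongr)
    have hP := hPle h hh.le
    have hXh := (abs_le.1 (hX h)).2
    have hP0 : P 0 = 0 := by simp [hPdef]
    have hbr : (2 * c + 2) * r ^ 2 ≤ b * r ^ 2 := by gcongr; linarith
    have hεr : ε * r ^ 2 ≤ 1 / 2 * r ^ 2 := by gcongr
    rw [hh] at hP hXh
    simp only [zero_sub, norm_neg]
    rw [hP0, norm_sub_sq_real, hh]
    linarith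
  · intro h hh
    linarith [hPle h hh,
      quadratic_sub_sq_le hc hδ hε.le hε1 (min_le_right _ _) hb hX h k]

end QuadraticSupport

/-! ### Sup- and inf-convolutions -/

section LasryLions

variable {E : Type*} [NormedAddCommGroup E] {O : Set E} {u S R : E → ℝ} {y : E → E} {a b : ℝ}

/-- `S` is the sup-convolution with parameter `a` of `u` over `O`; the supremum is required to be
attained. -/
def IsSupConvolution (u : E → ℝ) (O : Set E) (a : ℝ) (S : E → ℝ) : Prop :=
  ∀ x, IsGreatest ((fun z => u z - a / 2 * ‖x - z‖ ^ 2) '' O) (S x)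

/-- `R` is the inf-convolution with parameter `b` of `S`, and `y` selects points where the infimum
is attained. -/
structure IsInfConvolution (S : E → ℝ) (b : ℝ) (R : E → ℝ) (y : E → E) : Prop where
  eq_apply : ∀ x, R x = S (y x) + b / 2 * ‖x - y x‖ ^ 2
  le_apply : ∀ x w, R x ≤ S w + b / 2 * ‖x - w‖ ^ 2

lemma exists_isSupConvolution (hO : IsCompact O) (hne : O.Nonempty)
    (hu : UpperSemicontinuousOn u O) (a : ℝ) : ∃ S, IsSupConvolution u O a S := by
  refine Classical.skolem.1 fun x => ?_
  have hquad : Continuous fun z => -(a / 2 * ‖x - z‖ ^ 2) := by fun_prop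
  have husc := hu.add (hquad.upperSemicontinuous.upperSemicontinuousOn O)
  simp only [← sub_eq_add_neg] at husc
  obtain ⟨z, hz, hmax⟩ := husc.exists_isMaxOn hne hO
  exact ⟨_, ⟨z, hz, rfl⟩, forall_mem_image.2 hmax⟩

namespace IsSupConvolution

lemma sub_sq_le (hS : IsSupConvolution u O a S) {z : E} (hz : z ∈ O) (x : E) :
    u z - a / 2 * ‖x - z‖ ^ 2 ≤ S x :=
  (hS x).2 ⟨z, hz, rfl⟩

lemma exists_eq (hS : IsSupConvolution u O a S) (x : E) :
    ∃ z ∈ O, S x = u z - a / 2 * ‖x - z‖ ^ 2 := by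
  obtain ⟨z, hz, hzx⟩ := (hS x).1
  exact ⟨z, hz, hzx.symm⟩

variable [InnerProductSpace ℝ E]

lemma add_inner_sub_sq_le (hS : IsSupConvolution u O a S) {x z : E} (hz : z ∈ O)
    (hx : S x = u z - a / 2 * ‖x - z‖ ^ 2) (h : E) :
    S x + ⟪a • (z - x), h⟫ - a / 2 * ‖h‖ ^ 2 ≤ S (x + h) := by
  have hle := hS.sub_sq_le hz (x + h)
  rw [add_sub_right_comm, norm_add_sq_real] at hle
  rw [hx, real_inner_smul_left, ← neg_sub x z, inner_neg_left]
  linarith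

lemma convexOn_add_sq (hS : IsSupConvolution u O a S) (w : E) :
    ConvexOn ℝ univ fun x => S x + a / 2 * ‖x - w‖ ^ 2 := by
  choose z hz hSz using hS.exists_eq
  have hconc := concaveOn_sub_sq_of_forall_le (R := fun x => -S x)
    (q := fun x => -(a • (z x - x))) (b := a) (fun x h => by
      have := hS.add_inner_sub_sq_le (hz x) (hSz x) h
      rw [inner_neg_left]
      linarith) w
  refine hconc.neg.congr fun x _ => ?_
  simp only [Pi.neg_apply]
  ring

lemma continuous [FiniteDimensional ℝ E] (hS : IsSupConvolution u O a S) : Continuous S := by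
  have hconv := continuousOn_univ.1 ((hS.convexOn_add_sq 0).continuousOn isOpen_univ)
  have hquad : Continuous fun x : E => a / 2 * ‖x - 0‖ ^ 2 := by fun_prop
  exact (hconv.sub hquad).congr fun x => add_sub_cancel_right _ _

lemma exists_isInfConvolution [FiniteDimensional ℝ E] (hS : IsSupConvolution u O a S)
    (ha : 0 ≤ a) (hab : 2 * a < b) : ∃ R y, IsInfConvolution S b R y := by
  have hmin : ∀ x, ∃ y, ∀ w, S y + b / 2 * ‖x - y‖ ^ 2 ≤ S w + b / 2 * ‖x - w‖ ^ 2 := by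
    intro x
    obtain ⟨z, hz, -⟩ := hS.exists_eq x
    have hcont : Continuous fun w => S w + b / 2 * ‖x - w‖ ^ 2 :=
      hS.continuous.add (by fun_prop)
    refine hcont.exists_forall_le ?_
    have hlower : ∀ w, u z - a * ‖x - z‖ ^ 2 + (b / 2 - a) * dist x w ^ 2 ≤
        S w + b / 2 * ‖x - w‖ ^ 2 := by
      intro w
      have hSw := hS.sub_sq_le hz w
      have hsq := mul_le_mul_of_nonneg_left (norm_sub_sq_le_two_mul (x - z) (x - w)) ha
      rw [sub_sub_sub_cancel_left] at hsq
      rw [dist_eq_norm]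
      linarith
    have hdist := (tendsto_pow_atTop two_ne_zero).comp (tendsto_dist_left_cocompact_atTop x)
    exact tendsto_atTop_mono hlower
      (tendsto_atTop_add_const_left _ _ (hdist.const_mul_atTop (by linarith)))
  choose y hy using hmin
  exact ⟨_, y, fun _ => rfl, hy⟩

end IsSupConvolution

namespace IsInfConvolution

lemma le_apply_of_mem (hR : IsInfConvolution S b R y) (hS : IsSupConvolution u O a S)
    (hab : a ≤ b) {x : E} (hx : x ∈ O) : u x ≤ R x := by
  have hle := hS.sub_sq_le hx (y x)
  have hgap := mul_le_mul_of_nonneg_right hab (sq_nonneg ‖x - y x‖)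
  rw [norm_sub_rev] at hle
  rw [hR.eq_apply x]
  linarith

variable [InnerProductSpace ℝ E]

lemma apply_add_le (hR : IsInfConvolution S b R y) (x h : E) :
    R (x + h) ≤ R x + ⟪b • (x - y x), h⟫ + b / 2 * ‖h‖ ^ 2 := by
  have hle := hR.le_apply (x + h) (y x)
  rw [add_sub_right_comm, norm_add_sq_real] at hle
  rw [hR.eq_apply x, real_inner_smul_left]
  linarith

lemma add_inner_sub_sq_le (hR : IsInfConvolution S b R y) (hS : IsSupConvolution u O a S)
    (x k : E) : S (y x) + ⟪b • (x - y x), k⟫ - a / 2 * ‖k‖ ^ 2 ≤ S (y x + k) := by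
  refine le_of_forall_le_add_mul (C := (b - a) / 2 * ‖k‖ ^ 2) fun t ht ht1 => ?_
  have hconv := (hS.convexOn_add_sq (y x)).2 (mem_univ (y x)) (mem_univ (y x + k))
    (sub_nonneg.2 ht1.le) ht.le (by ring)
  have hpoint : (1 - t) • y x + t • (y x + k) = y x + t • k := by module
  have hmin := hR.le_apply x (y x + t • k)
  rw [hR.eq_apply x, ← sub_sub, norm_sub_sq_real (x - y x), real_inner_smul_right,
    norm_smul_sq] at hmin
  beta_reduce at hconv
  simp only [hpoint, sub_self, norm_zero, add_sub_cancel_left, norm_smul_sq, smul_eq_mul] at hconv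
  rw [real_inner_smul_left]
  refine le_of_mul_le_mul_left ?_ ht
  linarith

lemma add_inner_sub_mul_sq_le (hR : IsInfConvolution S b R y) (hS : IsSupConvolution u O a S)
    (ha : 0 ≤ a) (hab : 2 * a ≤ b) (x h : E) :
    R x + ⟪b • (x - y x), h⟫ - a * ‖h‖ ^ 2 ≤ R (x + h) := by
  obtain ⟨k, hk⟩ : ∃ k, y (x + h) = y x + k := ⟨y (x + h) - y x, by abel⟩
  have hsub := hR.add_inner_sub_sq_le hS x k
  have hsplit := mul_le_mul_of_nonneg_left (norm_sub_sq_le_two_mul h (h - k)) ha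
  have hgap := mul_le_mul_of_nonneg_right hab (sq_nonneg ‖h - k‖)
  have hpoint : x + h - (y x + k) = (x - y x) + (h - k) := by abel
  rw [sub_sub_cancel] at hsplit
  rw [hR.eq_apply x, hR.eq_apply (x + h), hk, hpoint, norm_add_sq_real, inner_sub_right]
  rw [real_inner_smul_left] at hsub ⊢
  linarith

lemma hasQuadraticRemainder (hR : IsInfConvolution S b R y) (hS : IsSupConvolution u O a S)
    (ha : 0 ≤ a) (hab : 2 * a ≤ b) : HasQuadraticRemainder R (fun x => b • (x - y x)) (b / 2) := by
  intro x h
  have hupper := hR.apply_add_le x h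
  have hlower := hR.add_inner_sub_mul_sq_le hS ha hab x h
  have hgap := mul_le_mul_of_nonneg_right hab (sq_nonneg ‖h‖)
  exact abs_le.2 ⟨by linarith, by linarith⟩

/-- The paraboloid touching `S` from below at `w` is itself an inf-convolution attained at `w`. -/
lemma exists_add_sq_le (hR : IsInfConvolution S b R y) (hS : IsSupConvolution u O a S)
    (hb : 0 < b) (hab : a ≤ b) (w : E) : ∃ x, S w + b / 2 * ‖x - w‖ ^ 2 ≤ R x := by
  obtain ⟨z, hz, hw⟩ := hS.exists_eq w
  set e := (a / b) • (z - w) with he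
  have hbe : b • e = a • (z - w) := by rw [he, smul_smul, mul_div_cancel₀ _ hb.ne']
  refine ⟨w + e, ?_⟩
  obtain ⟨h, hh⟩ : ∃ h, y (w + e) = w + h := ⟨y (w + e) - w, by abel⟩
  have hsub := hS.add_inner_sub_sq_le hz hw h
  have hgap := mul_le_mul_of_nonneg_right hab (sq_nonneg ‖h‖)
  rw [← hbe, real_inner_smul_left] at hsub
  rw [hR.eq_apply, hh, add_sub_add_left_eq_sub, add_sub_cancel_left, norm_sub_sq_real]
  linarith

lemma eventually_apply_add_le {c δ : ℝ} (hR : IsInfConvolution S b R y)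
    (hS : IsSupConvolution u O a S) (hc : 0 < c) (hδ : 0 < δ) (hac : a ≤ c)
    (hb : 2 * c + 2 + c ^ 2 / δ ≤ b) {X : E →L[ℝ] E} (hX : ∀ h, |⟪X h, h⟫| ≤ c * ‖h‖ ^ 2) {x : E}
    (hTaylor : HasSecondOrderTaylorAt R (b • (x - y x)) X x) :
    ∀ᶠ k in 𝓝 (0 : E), S (y x + k) ≤
      S (y x) + ⟪b • (x - y x), k⟫ + 1 / 2 * ⟪X k, k⟫ + δ * ‖k‖ ^ 2 := by
  have hfrac : 0 ≤ c ^ 2 / δ := by positivity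
  filter_upwards [eventually_forall_sub_sq_le hc hδ hb hR.apply_add_le hX hTaylor] with k hk
  obtain ⟨x', hx'⟩ := hR.exists_add_sq_le hS (by linarith) (by linarith) (y x + k)
  obtain ⟨h, rfl⟩ : ∃ h, x' = x + h := ⟨x' - x, by abel⟩
  have hpoint : x + h - (y x + k) = (x - y x) + (h - k) := by abel
  have hkh := hk h
  rw [hpoint, norm_add_sq_real, inner_sub_right] at hx'
  rw [hR.eq_apply x, real_inner_smul_left] at hkh
  rw [real_inner_smul_left]
  linarith

/-- Magic property: second order information on `R` at `x` is second order information on `u` at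
the point of `O` reached from `x` through the two convolutions. -/
lemma exists_isApproxSuperjet {c δ : ℝ} (hR : IsInfConvolution S b R y)
    (hS : IsSupConvolution u O a S) (ha : 0 ≤ a) (hc : 0 < c) (hδ : 0 < δ) (hac : a ≤ c)
    (hb : 2 * c + 2 + c ^ 2 / δ ≤ b) {X : E →L[ℝ] E} (hX : ∀ h, |⟪X h, h⟫| ≤ c * ‖h‖ ^ 2) {x : E}
    (hTaylor : HasSecondOrderTaylorAt R (b • (x - y x)) X x) :
    ∃ z ∈ O, R x ≤ u z - a / 2 * ‖x - z‖ ^ 2 ∧ IsApproxSuperjet u O δ z (b • (x - y x)) X := by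
  have hupper := hR.eventually_apply_add_le hS hc hδ hac hb hX hTaylor
  obtain ⟨z, hz, hzy⟩ := hS.exists_eq (y x)
  have hgrad : a • (z - y x) - b • (x - y x) = 0 := by
    refine eq_zero_of_eventually_inner_le (C := c / 2 + δ + a / 2) ?_
    filter_upwards [hupper] with k hk
    have hlower := hS.add_inner_sub_sq_le hz hzy k
    have hXk := (abs_le.1 (hX k)).2
    rw [inner_sub_left]
    linarith
  refine ⟨z, hz, ?_, ?_⟩
  · have hfrac : 0 ≤ c ^ 2 / δ := by positivity
    have hb0 : 0 < b := by linarith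
    have hpoint : x - y x = (a / b) • (z - y x) := by
      rw [div_eq_inv_mul, mul_smul, sub_eq_zero.1 hgrad, inv_smul_smul₀ hb0.ne']
    have hzx : x - z = (a / b - 1) • (z - y x) := by
      rw [sub_smul, ← hpoint, one_smul]; abel
    rw [hR.eq_apply, hzy, norm_sub_rev (y x) z, hzx, hpoint, norm_smul_sq, norm_smul_sq]
    have hθ : 0 ≤ (1 - a / b) * (a / b) := by
      have : a / b ≤ 1 := (div_le_one hb0).2 (by linarith)
      have : 0 ≤ a / b := by positivity
      exact mul_nonneg (by linarith) this
    have hcoef := mul_nonneg (mul_nonneg ha hθ) (sq_nonneg ‖z - y x‖)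
    have hab : b * (a / b) = a := mul_div_cancel₀ _ hb0.ne'
    linear_combination (1 / 2) * hcoef + (1 / 2) * (a / b) * ‖z - y x‖ ^ 2 * hab
  · filter_upwards [hupper] with k hk hzk
    have hle := hS.sub_sq_le hzk (y x + k)
    rw [add_sub_add_right_eq_sub] at hle
    linarith

end IsInfConvolution

end LasryLions

/-! ### Jensen lemma -/

section Jensen

variable {E : Type*} [NormedAddCommGroup E] [InnerProductSpace ℝ E]

namespace HasQuadraticRemainder

variable {R : E → ℝ} {q : E → E} {c : ℝ}

lemma hasFDerivAt (hR : HasQuadraticRemainder R q c) (x : E) :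
    HasFDerivAt R (innerSL ℝ (q x)) x := by
  rw [hasFDerivAt_iff_isLittleO_nhds_zero]
  have hbound : (fun h => R (x + h) - R x - innerSL ℝ (q x) h) =O[𝓝 0] fun h : E => ‖h‖ ^ 2 :=
    .of_bound c (.of_forall fun h => by simpa using hR x h)
  exact hbound.trans_isLittleO (Asymptotics.isLittleO_norm_pow_id one_lt_two)

lemma continuous (hR : HasQuadraticRemainder R q c) : Continuous R :=
  continuous_iff_continuousAt.2 fun x => (hR.hasFDerivAt x).continuousAt

lemma lipschitzWith (hR : HasQuadraticRemainder R q c) (hc : 0 < c) :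
    LipschitzWith (6 * c).toNNReal q := by
  refine LipschitzWith.of_dist_le_mul fun x' x => ?_
  rw [dist_eq_norm, dist_eq_norm, Real.coe_toNNReal _ (by positivity)]
  obtain ⟨e, rfl⟩ : ∃ e, x' = x + e := ⟨x' - x, by abel⟩
  set w := q (x + e) - q x with hw
  have hcross : ∀ k, ⟪w, k⟫ ≤ 3 * c * (‖e‖ ^ 2 + ‖k‖ ^ 2) := by
    intro k
    have hx'k := (abs_le.1 (hR (x + e) k)).1
    have hxk := (abs_le.1 (hR x (e + k))).2
    have hx := (abs_le.1 (hR x e)).1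
    have hsum := mul_le_mul_of_nonneg_left (norm_add_sq_le_two_mul e k) hc.le
    rw [inner_add_right, ← add_assoc] at hxk
    rw [hw, inner_sub_left]
    linarith
  have hw_sq := hcross ((6 * c)⁻¹ • w)
  rw [real_inner_smul_right, real_inner_self_eq_norm_sq, norm_smul_sq] at hw_sq
  rw [add_sub_cancel_left]
  refine abs_le_of_sq_le_sq' ?_ (by positivity) |>.2
  field_simp at hw_sq
  linarith

lemma hasSecondOrderTaylorAt (hR : HasQuadraticRemainder R q c) {x : E} {X : E →L[ℝ] E}
    (hq : HasFDerivAt q X x) : HasSecondOrderTaylorAt R (q x) X x := by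
  intro ε hε
  rw [hasFDerivAt_iff_isLittleO_nhds_zero, Asymptotics.isLittleO_iff] at hq
  obtain ⟨r, hr, hball⟩ := Metric.eventually_nhds_iff.1 (hq hε)
  refine Metric.eventually_nhds_iff.2 ⟨r, hr, fun h hh => ?_⟩
  rw [dist_zero_right] at hh
  have hderiv : ∀ s : ℝ, HasDerivAt
      (fun s : ℝ => R (x + s • h) - s * ⟪q x, h⟫ - s ^ 2 * (1 / 2 * ⟪X h, h⟫))
      ⟪q (x + s • h) - q x - X (s • h), h⟫ s := by
    intro s
    have hray : HasDerivAt (fun s : ℝ => x + s • h) h s := by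
      simpa using ((hasDerivAt_id s).smul_const h).const_add x
    have hlin : HasDerivAt (fun s : ℝ => s * ⟪q x, h⟫) ⟪q x, h⟫ s := by
      simpa using (hasDerivAt_id s).mul_const ⟪q x, h⟫
    have hquad : HasDerivAt (fun s : ℝ => s ^ 2 * (1 / 2 * ⟪X h, h⟫)) (s * ⟪X h, h⟫) s :=
      ((hasDerivAt_pow 2 s).mul_const _).congr_deriv (by push_cast; ring)
    refine ((((hR.hasFDerivAt _).comp_hasDerivAt s hray).sub hlin).sub hquad).congr_deriv ?_
    rw [inner_sub_left, inner_sub_left, map_smul, real_inner_smul_left, innerSL_apply_apply]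
  have hbound : ∀ s ∈ Ico (0 : ℝ) 1,
      ‖⟪q (x + s • h) - q x - X (s • h), h⟫‖ ≤ ε * ‖h‖ ^ 2 := by
    intro s hs
    have hsh : ‖s • h‖ ≤ ‖h‖ := by
      rw [norm_smul, Real.norm_of_nonneg hs.1]
      exact mul_le_of_le_one_left (norm_nonneg h) hs.2.le
    have hrem := hball (y := s • h) (by rw [dist_zero_right]; exact hsh.trans_lt hh)
    calc ‖⟪q (x + s • h) - q x - X (s • h), h⟫‖
        ≤ ‖q (x + s • h) - q x - X (s • h)‖ * ‖h‖ := norm_inner_le_norm _ _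
      _ ≤ ε * ‖h‖ * ‖h‖ := by gcongr; exact hrem.trans (by gcongr)
      _ = ε * ‖h‖ ^ 2 := by ring
  have hmean := norm_image_sub_le_of_norm_deriv_le_segment_01'
    (fun s _ => (hderiv s).hasDerivWithinAt) hbound
  rw [Real.norm_eq_abs] at hmean
  convert hmean using 2
  simp only [one_smul, zero_smul, add_zero]
  ring

end HasQuadraticRemainder

lemma HasSecondOrderTaylorAt.neg {R : E → ℝ} {q : E} {X : E →L[ℝ] E} {x : E}
    (hR : HasSecondOrderTaylorAt R q X x) :
    HasSecondOrderTaylorAt (fun x => -R x) (-q) (-X) x := by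
  intro ε hε
  filter_upwards [hR ε hε] with h hh
  rw [← abs_neg, _root_.neg_apply, inner_neg_left, inner_neg_left]
  convert hh using 2
  ring

lemma HasSecondOrderTaylorAt.inner_le {R : E → ℝ} {q : E} {X : E →L[ℝ] E} {x : E} {a : ℝ}
    (hR : HasSecondOrderTaylorAt R q X x)
    (hle : ∀ h, R (x + h) ≤ R x + ⟪q, h⟫ + a * ‖h‖ ^ 2) (h : E) :
    ⟪X h, h⟫ ≤ 2 * a * ‖h‖ ^ 2 := by
  refine le_of_forall_le_add_mul (C := 2 * ‖h‖ ^ 2) fun ε hε _ => ?_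
  obtain ⟨t, hTaylor, ht⟩ := (((tendsto_smul_nhdsGT_zero h).eventually (hR ε hε)).and
    self_mem_nhdsWithin).exists
  have hlower := (abs_le.1 hTaylor).1
  have hupper := hle (t • h)
  rw [norm_smul_sq] at hlower hupper
  rw [map_smul, real_inner_smul_left (X h), real_inner_smul_right (X h)] at hlower
  exact le_of_mul_le_mul_left (by linarith) (pow_pos ht 2)

lemma HasSecondOrderTaylorAt.le_inner {R : E → ℝ} {q : E} {X : E →L[ℝ] E} {x : E} {a : ℝ}
    (hR : HasSecondOrderTaylorAt R q X x)
    (hle : ∀ h, R x + ⟪q, h⟫ - a * ‖h‖ ^ 2 ≤ R (x + h)) (h : E) :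
    -(2 * a * ‖h‖ ^ 2) ≤ ⟪X h, h⟫ := by
  have hneg := hR.neg.inner_le (a := a) (fun h => by rw [inner_neg_left]; linarith [hle h]) h
  rw [_root_.neg_apply, inner_neg_left] at hneg
  linarith

open MeasureTheory Module in
lemma exists_mem_ball_forall_eq_imp_differentiableAt [FiniteDimensional ℝ E] {G : E → E}
    {L : NNReal} (hG : LipschitzWith L G) {r : ℝ} (hr : 0 < r) :
    ∃ p ∈ Metric.ball (0 : E) r, ∀ x, G x = p → DifferentiableAt ℝ G x := by
  let : MeasurableSpace E := borel E
  have : BorelSpace E := ⟨rfl⟩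
  set μ : Measure E := μH[finrank ℝ E]
  set N : Set E := {x | ¬DifferentiableAt ℝ G x}
  have hN : μ N = 0 := hG.ae_differentiableAt
  have himage : μ (G '' N) = 0 := by
    have hle := (hG.lipschitzOnWith (s := N)).hausdorffMeasure_image_le
      (d := (finrank ℝ E : ℝ)) (by positivity)
    rwa [show μH[finrank ℝ E] N = 0 from hN, mul_zero, nonpos_iff_eq_zero] at hle
  obtain ⟨p, hp, hpN⟩ : ∃ p ∈ Metric.ball (0 : E) r, p ∉ G '' N := by
    by_contra! hsub
    have hpos := Metric.isOpen_ball.measure_pos μ ⟨(0 : E), Metric.mem_ball_self hr⟩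
    exact hpos.ne' (measure_mono_null hsub himage)
  exact ⟨p, hp, fun x hx => not_not.1 fun hnot => hpN ⟨x, hnot, hx⟩⟩

lemma exists_forall_sub_inner_le [FiniteDimensional ℝ E] {F : E → ℝ} (hF : Continuous F) {C κ : ℝ}
    (hκ : 0 < κ) (hC : ∀ x, F x ≤ C - κ * ‖x‖ ^ 2) (p : E) :
    ∃ x, ∀ x', F x' - ⟪p, x'⟫ ≤ F x - ⟪p, x⟫ := by
  have hbound : ∀ x, F x - ⟪p, x⟫ ≤ C + ‖x‖ * (‖p‖ - κ * ‖x‖) := by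
    intro x
    have := (abs_le.1 (abs_real_inner_le_norm p x)).1
    linarith [hC x]
  have hnorm : Tendsto (fun x : E => ‖x‖) (cocompact E) atTop := tendsto_norm_cocompact_atTop
  have hfactor : Tendsto (fun x : E => ‖p‖ - κ * ‖x‖) (cocompact E) atBot :=
    tendsto_const_nhds.add_atBot (tendsto_neg_atTop_atBot.comp (hnorm.const_mul_atTop hκ))
  exact Continuous.exists_forall_ge (by fun_prop)
    (tendsto_atBot_mono hbound (tendsto_atBot_add_const_left _ _ (hnorm.atTop_mul_atBot₀ hfactor)))

namespace HasQuadraticRemainder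

variable {F : E → ℝ} {G : E → E} {c : ℝ} {x : E}

lemma eq_of_forall_sub_inner_le (hF : HasQuadraticRemainder F G c) {p : E}
    (hx : ∀ x', F x' - ⟪p, x'⟫ ≤ F x - ⟪p, x⟫) : G x = p := by
  have hsmall : ∀ h, ⟪G x - p, h⟫ ≤ c * ‖h‖ ^ 2 := by
    intro h
    have hmax := hx (x + h)
    have hrem := (abs_le.1 (hF x h)).1
    rw [inner_add_right] at hmax
    rw [inner_sub_left]
    linarith
  exact sub_eq_zero.1 (eq_zero_of_eventually_inner_le (.of_forall hsmall))

lemma inner_nonpos_of_forall_sub_inner_le (hF : HasQuadraticRemainder F G c)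
    (hx : ∀ x', F x' - ⟪G x, x'⟫ ≤ F x - ⟪G x, x⟫) {Z : E →L[ℝ] E} (hZ : HasFDerivAt G Z x)
    (h : E) : ⟪Z h, h⟫ ≤ 0 := by
  have hle := (hF.hasSecondOrderTaylorAt hZ).inner_le (a := 0) (fun h => ?_) h
  · simpa using hle
  · have hmax := hx (x + h)
    rw [inner_add_right] at hmax
    linarith

/-- Jensen's lemma. The gradient is Lipschitz, so it maps the null set where it is not
differentiable to a null set, and almost every small tilt avoids that image. -/
lemma exists_forall_sub_inner_le_differentiableAt [FiniteDimensional ℝ E] {C κ r : ℝ}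
    (hF : HasQuadraticRemainder F G c) (hc : 0 < c) (hκ : 0 < κ) (hr : 0 < r)
    (hC : ∀ x, F x ≤ C - κ * ‖x‖ ^ 2) :
    ∃ x, ‖G x‖ < r ∧ (∀ x', F x' - ⟪G x, x'⟫ ≤ F x - ⟪G x, x⟫) ∧ DifferentiableAt ℝ G x := by
  obtain ⟨p, hp, hdiff⟩ :=
    exists_mem_ball_forall_eq_imp_differentiableAt (hF.lipschitzWith hc) hr
  obtain ⟨x, hx⟩ := exists_forall_sub_inner_le hF.continuous hκ hC p
  have hgrad := hF.eq_of_forall_sub_inner_le hx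
  subst hgrad
  exact ⟨x, mem_ball_zero_iff.1 hp, hx, hdiff x rfl⟩

end HasQuadraticRemainder

end Jensen

section Doubling

variable {E : Type*} [NormedAddCommGroup E] [InnerProductSpace ℝ E]
  {R₁ R₂ : E → ℝ} {q₁ q₂ : E → E} {α c : ℝ}

/-- The doubled functional `R₁ x + R₂ y - α ‖x - y‖² / 2`. -/
def doubledFun (R₁ R₂ : E → ℝ) (α : ℝ) (z : WithLp 2 (E × E)) : ℝ :=
  R₁ z.fst + R₂ z.snd - α / 2 * ‖z.fst - z.snd‖ ^ 2

/-- The gradient of `doubledFun R₁ R₂ α` when `R₁` and `R₂` have gradient fields `q₁` and `q₂`. -/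
def doubledGrad (q₁ q₂ : E → E) (α : ℝ) (z : WithLp 2 (E × E)) : WithLp 2 (E × E) :=
  WithLp.toLp 2 (q₁ z.fst - α • (z.fst - z.snd), q₂ z.snd + α • (z.fst - z.snd))

/-- `(x, y)` maximizes `R₁ x + R₂ y - α ‖x - y‖² / 2` tilted by the linear forms `p₁`, `p₂`. -/
def IsTiltedMax (R₁ R₂ : E → ℝ) (α : ℝ) (p₁ p₂ x y : E) : Prop :=
  ∀ x' y', R₁ x' + R₂ y' - α / 2 * ‖x' - y'‖ ^ 2 - ⟪p₁, x'⟫ - ⟪p₂, y'⟫ ≤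
    R₁ x + R₂ y - α / 2 * ‖x - y‖ ^ 2 - ⟪p₁, x⟫ - ⟪p₂, y⟫

lemma inner_eq_inner_fst_add_inner_snd {F : Type*} [NormedAddCommGroup F] [InnerProductSpace ℝ F]
    (z w : WithLp 2 (F × E)) :
    ⟪z, w⟫ = ⟪z.fst, w.fst⟫ + ⟪z.snd, w.snd⟫ :=
  WithLp.prod_inner_apply z w

lemma HasQuadraticRemainder.doubled (hα : 0 ≤ α) (hR₁ : HasQuadraticRemainder R₁ q₁ c)
    (hR₂ : HasQuadraticRemainder R₂ q₂ c) :
    HasQuadraticRemainder (doubledFun R₁ R₂ α) (doubledGrad q₁ q₂ α) (c + α) := by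
  intro z h
  have hnorm := WithLp.prod_norm_sq_eq_of_L2 h
  have hpenalty := mul_le_mul_of_nonneg_left (norm_sub_sq_le_two_mul h.fst h.snd) hα
  have hnonneg := mul_nonneg hα (sq_nonneg ‖h.fst - h.snd‖)
  have hαh := mul_nonneg hα (sq_nonneg ‖h‖)
  have hrem₁ := abs_le.1 (hR₁ z.fst h.fst)
  have hrem₂ := abs_le.1 (hR₂ z.snd h.snd)
  have hexpand := norm_add_sq_real (z.fst - z.snd) (h.fst - h.snd)
  have hgrad : ⟪doubledGrad q₁ q₂ α z, h⟫ =
      ⟪q₁ z.fst, h.fst⟫ + ⟪q₂ z.snd, h.snd⟫ - α * ⟪z.fst - z.snd, h.fst - h.snd⟫ := by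
    simp only [doubledGrad, WithLp.toLp_fst, WithLp.toLp_snd, inner_eq_inner_fst_add_inner_snd,
      inner_sub_left, inner_add_left, real_inner_smul_left, inner_sub_right]
    ring
  rw [hgrad, hnorm]
  rw [hnorm] at hαh
  simp only [doubledFun, WithLp.add_fst, WithLp.add_snd, add_sub_add_comm, hexpand]
  exact abs_le.2 ⟨by linarith, by linarith⟩

lemma hasFDerivAt_doubledGrad {z : WithLp 2 (E × E)} {X Y : E →L[ℝ] E}
    (hX : HasFDerivAt q₁ X z.fst) (hY : HasFDerivAt q₂ Y z.snd) :
    ∃ Z : WithLp 2 (E × E) →L[ℝ] WithLp 2 (E × E), HasFDerivAt (doubledGrad q₁ q₂ α) Z z ∧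
      ∀ h, ⟪Z h, h⟫ = ⟪X h.fst, h.fst⟫ + ⟪Y h.snd, h.snd⟫ - α * ‖h.fst - h.snd‖ ^ 2 := by
  have hfst := (WithLp.fstL 2 ℝ E E).hasFDerivAt (x := z)
  have hsnd := (WithLp.sndL 2 ℝ E E).hasFDerivAt (x := z)
  have hdiff := (hfst.sub hsnd).const_smul α
  have hpair := ((HasFDerivAt.comp z (g := q₁) hX hfst).sub hdiff).prodMk
    ((HasFDerivAt.comp z (g := q₂) hY hsnd).add hdiff)
  refine ⟨_, (WithLp.prodContinuousLinearEquiv 2 ℝ E E).symm.hasFDerivAt.comp z hpair, fun h => ?_⟩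
  rw [norm_sub_sq_real, inner_eq_inner_fst_add_inner_snd]
  simp [inner_sub_left, inner_add_left, real_inner_smul_left, real_inner_comm h.fst h.snd]
  ring

lemma differentiableAt_of_doubledGrad {z : WithLp 2 (E × E)}
    (hz : DifferentiableAt ℝ (doubledGrad q₁ q₂ α) z) :
    DifferentiableAt ℝ q₁ z.fst ∧ DifferentiableAt ℝ q₂ z.snd := by
  have hfst : DifferentiableAt ℝ (fun x : E => WithLp.toLp 2 (x, z.snd)) z.fst :=
    (WithLp.prodContinuousLinearEquiv 2 ℝ E E).symm.differentiableAt.comp z.fst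
      (f := fun x => (x, z.snd)) (by fun_prop)
  have hsnd : DifferentiableAt ℝ (fun y : E => WithLp.toLp 2 (z.fst, y)) z.snd :=
    (WithLp.prodContinuousLinearEquiv 2 ℝ E E).symm.differentiableAt.comp z.snd
      (f := fun y => (z.fst, y)) (by fun_prop)
  have hq₁ := (WithLp.fstL 2 ℝ E E).differentiableAt.comp z.fst (hz.comp z.fst hfst)
  have hq₂ := (WithLp.sndL 2 ℝ E E).differentiableAt.comp z.snd (hz.comp z.snd hsnd)
  constructor
  · refine (hq₁.add (g := fun x => α • (x - z.snd)) (by fun_prop)).congr_of_eventuallyEq ?_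
    exact .of_forall fun x => by simp [doubledGrad]
  · refine (hq₂.sub (g := fun y => α • (z.fst - y)) (by fun_prop)).congr_of_eventuallyEq ?_
    exact .of_forall fun y => by simp [doubledGrad]

lemma exists_doubled_maximum [FiniteDimensional ℝ E] {C κ r : ℝ} (hα : 0 ≤ α) (hc : 0 < c)
    (hκ : 0 < κ) (hr : 0 < r) (hR₁ : HasQuadraticRemainder R₁ q₁ c)
    (hR₂ : HasQuadraticRemainder R₂ q₂ c) (hC₁ : ∀ x, R₁ x ≤ C - κ * ‖x‖ ^ 2)
    (hC₂ : ∀ x, R₂ x ≤ C - κ * ‖x‖ ^ 2) :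
    ∃ (x y p₁ p₂ : E) (X Y : E →L[ℝ] E), ‖p₁‖ ≤ r ∧ ‖p₂‖ ≤ r ∧
      IsTiltedMax R₁ R₂ α p₁ p₂ x y ∧
      q₁ x = α • (x - y) + p₁ ∧ q₂ y = -(α • (x - y)) + p₂ ∧
      HasFDerivAt q₁ X x ∧ HasFDerivAt q₂ Y y ∧
      ∀ h k, ⟪X h, h⟫ + ⟪Y k, k⟫ ≤ α * ‖h - k‖ ^ 2 := by
  have hF := hR₁.doubled hα hR₂
  have hcoercive : ∀ z, doubledFun R₁ R₂ α z ≤ 2 * C - κ * ‖z‖ ^ 2 := by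
    intro z
    rw [WithLp.prod_norm_sq_eq_of_L2, doubledFun]
    linarith [hC₁ z.fst, hC₂ z.snd, mul_nonneg hα (sq_nonneg ‖z.fst - z.snd‖)]
  obtain ⟨z, hzr, hz, hdiff⟩ :=
    hF.exists_forall_sub_inner_le_differentiableAt (by positivity) hκ hr hcoercive
  obtain ⟨hq₁, hq₂⟩ := differentiableAt_of_doubledGrad hdiff
  obtain ⟨Z, hZ, hZinner⟩ := hasFDerivAt_doubledGrad (α := α) hq₁.hasFDerivAt hq₂.hasFDerivAt
  refine ⟨z.fst, z.snd, _, _, _, _, (WithLp.norm_fst_le E _).trans hzr.le,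
    (WithLp.norm_snd_le E _).trans hzr.le, fun x' y' => ?_, ?_, ?_, hq₁.hasFDerivAt,
    hq₂.hasFDerivAt, fun h k => ?_⟩
  · have hmax := hz (WithLp.toLp 2 (x', y'))
    simp only [doubledFun, inner_eq_inner_fst_add_inner_snd, WithLp.toLp_fst,
      WithLp.toLp_snd] at hmax
    linarith
  · simp [doubledGrad]
  · simp [doubledGrad]
  · have hnonpos := hF.inner_nonpos_of_forall_sub_inner_le hz hZ (WithLp.toLp 2 (h, k))
    simp only [hZinner, WithLp.toLp_fst, WithLp.toLp_snd] at hnonpos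
    linarith

end Doubling

/-! ### The theorem on sums -/

section Sums

variable {E : Type*} [NormedAddCommGroup E] [InnerProductSpace ℝ E] {O : Set E} {u v R : E → ℝ}
  {q : E → E} {a b c α δ ρ r : ℝ}

/-- `R`, with gradient field `q`, is a `C^{1,1}` regularization of `u` from above, with penalization
`a` of the displacement. Second order expansions of `R` with Hessian bounded by `c` are inherited,
up to the quadratic error `δ`, by `u` at some nearby point of `O`. -/
structure IsRegularization (u : E → ℝ) (O : Set E) (a b c δ : ℝ) (R : E → ℝ) (q : E → E) :
    Prop where
  apply_le : ∀ x ∈ O, u x ≤ R x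
  exists_le : ∀ x, ∃ z ∈ O, R x ≤ u z - a / 2 * ‖x - z‖ ^ 2
  add_inner_sub_le : ∀ x h, R x + ⟪q x, h⟫ - a * ‖h‖ ^ 2 ≤ R (x + h)
  hasQuadraticRemainder : HasQuadraticRemainder R q b
  exists_isApproxSuperjet : ∀ x X, (∀ h, |⟪X h, h⟫| ≤ c * ‖h‖ ^ 2) →
    HasSecondOrderTaylorAt R (q x) X x →
    ∃ z ∈ O, R x ≤ u z - a / 2 * ‖x - z‖ ^ 2 ∧ IsApproxSuperjet u O δ z (q x) X

lemma exists_isRegularization [FiniteDimensional ℝ E] (hO : IsCompact O) (hne : O.Nonempty)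
    (hu : UpperSemicontinuousOn u O) (ha : 0 ≤ a) (hc : 0 < c) (hδ : 0 < δ) (hac : a ≤ c)
    (hb : 2 * c + 2 + c ^ 2 / δ ≤ 2 * b) : ∃ R q, IsRegularization u O a b c δ R q := by
  have hfrac : 0 ≤ c ^ 2 / δ := by positivity
  obtain ⟨S, hS⟩ := exists_isSupConvolution hO hne hu a
  obtain ⟨R, y, hR⟩ := hS.exists_isInfConvolution ha (b := 2 * b) (by linarith)
  refine ⟨R, fun x => (2 * b) • (x - y x), ?_, fun x => ?_, ?_, ?_, ?_⟩
  · exact fun x hx => hR.le_apply_of_mem hS (by linarith) hx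
  · obtain ⟨z, hz, hzx⟩ := hS.exists_eq x
    refine ⟨z, hz, ?_⟩
    simpa [hzx] using hR.le_apply x x
  · exact hR.add_inner_sub_mul_sq_le hS ha (by linarith)
  · simpa using hR.hasQuadraticRemainder hS ha (by linarith)
  · exact fun x X hX hTaylor => hR.exists_isApproxSuperjet hS ha hc hδ hac hb hX hTaylor

lemma IsRegularization.le_sub_mul_sq {C : ℝ} (hR : IsRegularization u O a b c δ R q) (ha : 0 ≤ a)
    (hρ : ∀ z ∈ O, ‖z‖ ≤ ρ) (hC : ∀ z ∈ O, u z ≤ C) (x : E) :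
    R x ≤ C + a / 2 * ρ ^ 2 - a / 4 * ‖x‖ ^ 2 := by
  obtain ⟨z, hz, hzx⟩ := hR.exists_le x
  have hzρ : ‖z‖ ^ 2 ≤ ρ ^ 2 := by gcongr; exact hρ z hz
  have hsplit := norm_add_sq_le_two_mul (x - z) z
  rw [sub_add_cancel] at hsplit
  have := mul_le_mul_of_nonneg_left (hsplit.trans (add_le_add_right (mul_le_mul_of_nonneg_left hzρ
    zero_le_two) _)) ha
  linarith [hC z hz]

lemma norm_sub_sq_sub_norm_sub_sq_le {z w : E} {D : ℝ} (hzw : ‖z - w‖ ≤ D) (x y : E) :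
    ‖z - w‖ ^ 2 - ‖x - y‖ ^ 2 ≤ 2 * D * (‖x - z‖ + ‖y - w‖) := by
  have hpoint : x - y = z - w + (x - z - (y - w)) := by abel
  have hinner := neg_le_of_abs_le (abs_real_inner_le_norm (z - w) (x - z - (y - w)))
  have hnorm := mul_le_mul hzw (norm_sub_le (x - z) (y - w)) (norm_nonneg _)
    ((norm_nonneg _).trans hzw)
  rw [hpoint, norm_add_sq_real]
  linarith [sq_nonneg ‖x - z - (y - w)‖]

lemma inner_sub_inner_le_mul_norm_sub {p : E} (hp : ‖p‖ ≤ r) (x z : E) :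
    ⟪p, z⟫ - ⟪p, x⟫ ≤ r * ‖x - z‖ := by
  rw [← inner_sub_right, norm_sub_rev]
  exact (real_inner_le_norm _ _).trans (by gcongr)

omit [InnerProductSpace ℝ E] in
lemma norm_sub_le_two_mul_of_le {z w : E} (hz : ‖z‖ ≤ ρ) (hw : ‖w‖ ≤ ρ) : ‖z - w‖ ≤ 2 * ρ :=
  (norm_sub_le z w).trans (by linarith)

section TiltedMax

variable {R₁ R₂ : E → ℝ} {p₁ p₂ x y z w : E}

lemma IsTiltedMax.mul_norm_sub_add_norm_sub_le (hmax : IsTiltedMax R₁ R₂ α p₁ p₂ x y)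
    (hα : 0 ≤ α) (hp₁ : ‖p₁‖ ≤ r) (hp₂ : ‖p₂‖ ≤ r) (hz : ‖z‖ ≤ ρ) (hw : ‖w‖ ≤ ρ)
    (hzx : R₁ x ≤ R₁ z - a / 2 * ‖x - z‖ ^ 2) (hwy : R₂ y ≤ R₂ w - a / 2 * ‖y - w‖ ^ 2)
    (ha : 0 ≤ a) : a * (‖x - z‖ + ‖y - w‖) ≤ 4 * (2 * α * ρ + r) := by
  set N := ‖x - z‖ + ‖y - w‖
  have hN0 : 0 ≤ N := by positivity
  have hNsq : a * N ^ 2 ≤ a * (2 * (‖x - z‖ ^ 2 + ‖y - w‖ ^ 2)) := by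
    gcongr
    exact add_sq_le
  have hpen := mul_le_mul_of_nonneg_left
    (norm_sub_sq_sub_norm_sub_sq_le (norm_sub_le_two_mul_of_le hz hw) x y) hα
  have htilt₁ := inner_sub_inner_le_mul_norm_sub hp₁ x z
  have htilt₂ := inner_sub_inner_le_mul_norm_sub hp₂ y w
  have hkey : (a * N) * N ≤ 4 * (2 * α * ρ + r) * N := by linarith [hmax z w]
  rcases hN0.eq_or_lt with h0 | hpos
  · have hρ : 0 ≤ ρ := (norm_nonneg z).trans hz
    have hr : 0 ≤ r := (norm_nonneg p₁).trans hp₁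
    rw [← h0, mul_zero]
    positivity
  · exact le_of_mul_le_mul_right hkey hpos

lemma IsTiltedMax.apply_add_apply_le (hmax : IsTiltedMax R₁ R₂ α p₁ p₂ x y)
    (hα : 0 ≤ α) (hp₁ : ‖p₁‖ ≤ r) (hp₂ : ‖p₂‖ ≤ r) (hz : ‖z‖ ≤ ρ) (hw : ‖w‖ ≤ ρ)
    {z' w' : E} (hz' : ‖z'‖ ≤ ρ) (hw' : ‖w'‖ ≤ ρ) :
    R₁ z' + R₂ w' - α / 2 * ‖z' - w'‖ ^ 2 ≤ R₁ x + R₂ y - α / 2 * ‖z - w‖ ^ 2 +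
      (2 * α * ρ * (‖x - z‖ + ‖y - w‖) + r * (4 * ρ + (‖x - z‖ + ‖y - w‖))) := by
  have hr : 0 ≤ r := (norm_nonneg p₁).trans hp₁
  have hpen := mul_le_mul_of_nonneg_left
    (norm_sub_sq_sub_norm_sub_sq_le (norm_sub_le_two_mul_of_le hz hw) x y) hα
  have hxz' : r * ‖x - z'‖ ≤ r * (‖x - z‖ + 2 * ρ) := by
    gcongr
    exact (norm_sub_le_norm_sub_add_norm_sub x z z').trans
      (add_le_add_right (norm_sub_le_two_mul_of_le hz hz') _)
  have hyw' : r * ‖y - w'‖ ≤ r * (‖y - w‖ + 2 * ρ) := by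
    gcongr
    exact (norm_sub_le_norm_sub_add_norm_sub y w w').trans
      (add_le_add_right (norm_sub_le_two_mul_of_le hw hw') _)
  have htilt₁ := inner_sub_inner_le_mul_norm_sub hp₁ x z'
  have htilt₂ := inner_sub_inner_le_mul_norm_sub hp₂ y w'
  linarith [hmax z' w']

end TiltedMax

lemma abs_inner_le_of_inner_add_inner_le {X Y : E →L[ℝ] E} (hα : 0 ≤ α) (ha : 0 ≤ a)
    (hac : 2 * a + α ≤ c) (hXY : ∀ h k, ⟪X h, h⟫ + ⟪Y k, k⟫ ≤ α * ‖h - k‖ ^ 2)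
    (hX : ∀ h, -(2 * a * ‖h‖ ^ 2) ≤ ⟪X h, h⟫) (h : E) : |⟪X h, h⟫| ≤ c * ‖h‖ ^ 2 := by
  have hupper := hXY h 0
  have hgap := mul_le_mul_of_nonneg_right hac (sq_nonneg ‖h‖)
  have hαh := mul_nonneg hα (sq_nonneg ‖h‖)
  have hah := mul_nonneg ha (sq_nonneg ‖h‖)
  rw [inner_zero_right, add_zero, sub_zero] at hupper
  exact abs_le.2 ⟨by linarith [hX h], by linarith⟩

variable [FiniteDimensional ℝ E]

lemma exists_superjets_of_isRegularization {R₁ R₂ : E → ℝ} {q₁ q₂ : E → E} {C : ℝ}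
    (hR₁ : IsRegularization u O a b c δ R₁ q₁) (hR₂ : IsRegularization v O a b c δ R₂ q₂)
    (ha : 0 < a) (hb : 0 < b) (hα : 0 ≤ α) (hr : 0 < r) (hac : 2 * a + α ≤ c)
    (hρ : ∀ z ∈ O, ‖z‖ ≤ ρ) (hCu : ∀ z ∈ O, u z ≤ C) (hCv : ∀ z ∈ O, v z ≤ C) :
    ∃ z ∈ O, ∃ w ∈ O, ∃ (N : ℝ) (ζ ω : E) (X Y : E →L[ℝ] E),
      a * N ≤ 4 * (2 * α * ρ + r) ∧
      (∀ z' ∈ O, ∀ w' ∈ O, u z' + v w' - α / 2 * ‖z' - w'‖ ^ 2 ≤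
        u z + v w - α / 2 * ‖z - w‖ ^ 2 + (2 * α * ρ * N + r * (4 * ρ + N))) ∧
      ‖ζ - α • (z - w)‖ ≤ α * N + r ∧ ‖ω + α • (z - w)‖ ≤ α * N + r ∧
      IsApproxSuperjet u O δ z ζ X ∧ IsApproxSuperjet v O δ w ω Y ∧
      ∀ h k, ⟪X h, h⟫ + ⟪Y k, k⟫ ≤ α * ‖h - k‖ ^ 2 := by
  obtain ⟨x, y, p₁, p₂, X, Y, hp₁, hp₂, hmax, hqx, hqy, hX, hY, hXY⟩ :=
    exists_doubled_maximum hα hb (by positivity : 0 < a / 4) hr hR₁.hasQuadraticRemainder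
      hR₂.hasQuadraticRemainder (hR₁.le_sub_mul_sq ha.le hρ hCu) (hR₂.le_sub_mul_sq ha.le hρ hCv)
  have hTaylor₁ := hR₁.hasQuadraticRemainder.hasSecondOrderTaylorAt hX
  have hTaylor₂ := hR₂.hasQuadraticRemainder.hasSecondOrderTaylorAt hY
  have hXc := abs_inner_le_of_inner_add_inner_le hα ha.le hac hXY
    (hTaylor₁.le_inner (hR₁.add_inner_sub_le x))
  have hYc := abs_inner_le_of_inner_add_inner_le hα ha.le hac
    (fun k h => by rw [add_comm, norm_sub_rev]; exact hXY h k)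
    (hTaylor₂.le_inner (hR₂.add_inner_sub_le y))
  obtain ⟨z, hz, hzx, hzX⟩ := hR₁.exists_isApproxSuperjet x X hXc hTaylor₁
  obtain ⟨w, hw, hwy, hwY⟩ := hR₂.exists_isApproxSuperjet y Y hYc hTaylor₂
  have hgrad : ‖α • (x - y) - α • (z - w)‖ ≤ α * (‖x - z‖ + ‖y - w‖) := by
    rw [← smul_sub, sub_sub_sub_comm, norm_smul, Real.norm_of_nonneg hα]
    gcongr
    exact norm_sub_le _ _
  refine ⟨z, hz, w, hw, ‖x - z‖ + ‖y - w‖, q₁ x, q₂ y, X, Y, ?_,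
    fun z' hz' w' hw' => ?_, ?_, ?_, hzX, hwY, hXY⟩
  · exact hmax.mul_norm_sub_add_norm_sub_le hα hp₁ hp₂ (hρ z hz) (hρ w hw)
      (hzx.trans (sub_le_sub_right (hR₁.apply_le z hz) _))
      (hwy.trans (sub_le_sub_right (hR₂.apply_le w hw) _)) ha.le
  · have hnear := hmax.apply_add_apply_le hα hp₁ hp₂ (hρ z hz) (hρ w hw) (hρ z' hz') (hρ w' hw')
    have := hR₁.apply_le z' hz'
    have := hR₂.apply_le w' hw'
    have hxz := mul_nonneg ha.le (sq_nonneg ‖x - z‖)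
    have hyw := mul_nonneg ha.le (sq_nonneg ‖y - w‖)
    linarith
  · rw [hqx, add_sub_right_comm]
    exact norm_add_le_of_le hgrad hp₁
  · have hsplit : q₂ y + α • (z - w) = p₂ - (α • (x - y) - α • (z - w)) := by rw [hqy]; abel
    rw [hsplit, add_comm]
    exact norm_sub_le_of_le hp₂ hgrad

/-- **Theorem on sums** of Crandall, Ishii and Lions, in approximate form. -/
theorem exists_superjets_sum (hO : IsCompact O) (hne : O.Nonempty)
    (hu : UpperSemicontinuousOn u O) (hv : UpperSemicontinuousOn v O) (hα : 0 < α) (hδ : 0 < δ) :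
    ∃ z ∈ O, ∃ w ∈ O, ∃ (ζ ω : E) (X Y : E →L[ℝ] E),
      (∀ z' ∈ O, ∀ w' ∈ O, u z' + v w' - α / 2 * ‖z' - w'‖ ^ 2 ≤
        u z + v w - α / 2 * ‖z - w‖ ^ 2 + δ) ∧
      ‖ζ - α • (z - w)‖ ≤ δ ∧ ‖ω + α • (z - w)‖ ≤ δ ∧
      IsApproxSuperjet u O δ z ζ X ∧ IsApproxSuperjet v O δ w ω Y ∧
      ∀ h k, ⟪X h, h⟫ + ⟪Y k, k⟫ ≤ α * ‖h - k‖ ^ 2 := by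
  obtain ⟨ρ, hρ0, hρ⟩ := hO.isBounded.exists_pos_norm_le
  obtain ⟨Cu, hCu⟩ := hu.bddAbove_of_isCompact hO
  obtain ⟨Cv, hCv⟩ := hv.bddAbove_of_isCompact hO
  set ε := δ / (4 * α * ρ + 2 * α)
  have hε : ε * (4 * α * ρ + 2 * α) = δ := div_mul_cancel₀ _ (by positivity)
  set r := δ / (2 * (4 * ρ + 2 + ε))
  have hr : r * (2 * (4 * ρ + 2 + ε)) = δ := div_mul_cancel₀ _ (by positivity)
  set a := 4 * (2 * α * ρ + r) / ε
  have ha : a * ε = 4 * (2 * α * ρ + r) := div_mul_cancel₀ _ (by positivity)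
  have hr0 : 0 < r := by positivity
  have ha0 : 0 < a := by positivity
  set c := 2 * a + α
  have hc0 : 0 < c := by positivity
  set b := 2 * c + 2 + c ^ 2 / δ
  have hb0 : 0 < b := by positivity
  obtain ⟨R₁, q₁, hR₁⟩ := exists_isRegularization (b := b) hO hne hu ha0.le hc0 hδ
    (by linarith) (by linarith)
  obtain ⟨R₂, q₂, hR₂⟩ := exists_isRegularization (b := b) hO hne hv ha0.le hc0 hδ
    (by linarith) (by linarith)
  obtain ⟨z, hz, w, hw, N, ζ, ω, X, Y, hN, hnear, hζ, hω, hX, hY, hXY⟩ :=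
    exists_superjets_of_isRegularization hR₁ hR₂ ha0 hb0 hα.le hr0 le_rfl hρ
      (fun z hz => (hCu (mem_image_of_mem u hz)).trans (le_max_left Cu Cv))
      (fun z hz => (hCv (mem_image_of_mem v hz)).trans (le_max_right Cu Cv))
  have hNε : N ≤ ε := le_of_mul_le_mul_left (hN.trans_eq ha.symm) ha0
  have hαN : α * N ≤ α * ε := by gcongr
  have hραN : α * ρ * N ≤ α * ρ * ε := by gcongr
  have hrN : r * N ≤ r * ε := by gcongr
  have hrρ : 0 < r * ρ := by positivity
  have hrε : 0 < r * ε := by positivity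
  have hρε : 0 < α * ρ * ε := by positivity
  have hαε : 0 < α * ε := by positivity
  refine ⟨z, hz, w, hw, ζ, ω, X, Y, fun z' hz' w' hw' => (hnear z' hz' w' hw').trans ?_,
    hζ.trans ?_, hω.trans ?_, hX, hY, hXY⟩ <;> linarith

end Sums

/-! ### Parabolic superjets -/

section Parabolic

variable {E : Type*} [NormedAddCommGroup E] [InnerProductSpace ℝ E] {s D : Set (ℝ × E)}
  {u v : ℝ × E → ℝ} {z : ℝ × E} {p A α δ : ℝ} {r : E} {X : E →L[ℝ] E}

/-- `(p, r, X)` is a parabolic second order superjet of `u` at `z` relative to `s`. The expansion is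
an exact inequality near `z`, with a remainder that is quadratic in time and absent in space. -/
def IsSuperjet (s : Set (ℝ × E)) (u : ℝ × E → ℝ) (z : ℝ × E) (p : ℝ) (r : E) (X : E →L[ℝ] E) :
    Prop :=
  ∃ a : ℝ, ∀ᶠ w in 𝓝[s] z, u w ≤ u z + p * (w.1 - z.1) + a * (w.1 - z.1) ^ 2 +
    ⟪r, w.2 - z.2⟫ + 1 / 2 * ⟪X (w.2 - z.2), w.2 - z.2⟫

/-- The squared distance of the space-time points `q` and `w` after scaling time by `A`. -/
def parabolicPenalty (A : ℝ) (q w : ℝ × E) : ℝ := A ^ 2 * (q.1 - w.1) ^ 2 + ‖q.2 - w.2‖ ^ 2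

/-- `(q, w)` maximizes the doubled function `u q + v w - α / 2 * parabolicPenalty A q w` over
`D ×ˢ D` up to `δ`. -/
def IsNearMax (D : Set (ℝ × E)) (u v : ℝ × E → ℝ) (α A δ : ℝ) (q w : ℝ × E) : Prop :=
  ∀ q' ∈ D, ∀ w' ∈ D, u q' + v w' - α / 2 * parabolicPenalty A q' w' ≤
    u q + v w - α / 2 * parabolicPenalty A q w + δ

/-- Superjets `(p₁, r₁, X)` of `u` at `q` and `(p₂, r₂, Y)` of `v` at `w`, where `(q, w)` nearly
maximizes the doubled function with weight `α` and time scale `A`. The gradients and Hessians agree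
up to `δ` with those of the penalty `α / 2 * ‖x - y‖ ^ 2`. -/
structure IsDoubledJet (D : Set (ℝ × E)) (u v : ℝ × E → ℝ) (α A δ : ℝ) (q w : ℝ × E) (p₁ p₂ : ℝ)
    (r₁ r₂ : E) (X Y : E →L[ℝ] E) : Prop where
  left_mem : q ∈ D
  right_mem : w ∈ D
  isNearMax : IsNearMax D u v α A δ q w
  time_le : |p₁ + p₂| ≤ δ
  norm_left_le : ‖r₁ - α • (q.2 - w.2)‖ ≤ δ
  norm_right_le : ‖r₂ + α • (q.2 - w.2)‖ ≤ δ
  left : IsSuperjet D u q p₁ r₁ X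
  right : IsSuperjet D v w p₂ r₂ Y
  inner_add_le : ∀ h k, ⟪X h, h⟫ + ⟪Y k, k⟫ ≤ α * ‖h - k‖ ^ 2 + δ * (‖h‖ ^ 2 + ‖k‖ ^ 2)

/-- Scaling of time by `A`, from the space-time product to the Euclidean one. -/
def timeScaling (E : Type*) [NormedAddCommGroup E] [InnerProductSpace ℝ E] (hA : A ≠ 0) :
    (ℝ × E) ≃L[ℝ] WithLp 2 (ℝ × E) :=
  ((ContinuousLinearEquiv.smulLeft (Units.mk0 A hA)).prodCongr (.refl ℝ E)).trans
    (WithLp.prodContinuousLinearEquiv 2 ℝ ℝ E).symm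

lemma timeScaling_apply (hA : A ≠ 0) (q : ℝ × E) :
    timeScaling E hA q = WithLp.toLp 2 (A * q.1, q.2) := rfl

lemma norm_timeScaling_sub_sq (hA : A ≠ 0) (q w : ℝ × E) :
    ‖timeScaling E hA q - timeScaling E hA w‖ ^ 2 = parabolicPenalty A q w := by
  rw [← map_sub, timeScaling_apply, WithLp.prod_norm_sq_eq_of_L2]
  simp [parabolicPenalty, mul_pow]

/-- The space-space block of an operator on space-time. -/
def spaceBlock (X : WithLp 2 (ℝ × E) →L[ℝ] WithLp 2 (ℝ × E)) : E →L[ℝ] E :=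
  WithLp.sndL 2 ℝ ℝ E ∘L X ∘L
    (WithLp.prodContinuousLinearEquiv 2 ℝ ℝ E).symm.toContinuousLinearMap ∘L .inr ℝ ℝ E

lemma spaceBlock_inner (X : WithLp 2 (ℝ × E) →L[ℝ] WithLp 2 (ℝ × E)) (e : E) :
    ⟪spaceBlock X e, e⟫ = ⟪X (WithLp.toLp 2 (0, e)), WithLp.toLp 2 ((0 : ℝ), e)⟫ := by
  rw [WithLp.prod_inner_apply]
  simp [spaceBlock]

/-- The mixed terms are absorbed by Young's inequality. -/
lemma inner_le_spaceBlock_inner (X : WithLp 2 (ℝ × E) →L[ℝ] WithLp 2 (ℝ × E)) (hδ : 0 < δ)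
    (τ : ℝ) (e : E) : ⟪X (WithLp.toLp 2 (τ, e)), WithLp.toLp 2 (τ, e)⟫ ≤
      (‖X‖ + ‖X‖ ^ 2 / δ) * τ ^ 2 + ⟪spaceBlock X e, e⟫ + δ * ‖e‖ ^ 2 := by
  set z₁ : WithLp 2 (ℝ × E) := WithLp.toLp 2 (τ, 0) with hz₁
  set z₂ : WithLp 2 (ℝ × E) := WithLp.toLp 2 (0, e) with hz₂
  have hsum : WithLp.toLp 2 (τ, e) = z₁ + z₂ := by rw [hz₁, hz₂, ← WithLp.toLp_add]; simp
  have hnorm₁ : ‖z₁‖ = |τ| := by rw [hz₁, WithLp.norm_toLp_fst, Real.norm_eq_abs]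
  have hnorm₂ : ‖z₂‖ = ‖e‖ := by rw [hz₂, WithLp.norm_toLp_snd]
  have hinner : ∀ z w : WithLp 2 (ℝ × E), ⟪X z, w⟫ ≤ ‖X‖ * ‖z‖ * ‖w‖ := fun z w =>
    (real_inner_le_norm _ _).trans (by gcongr; exact X.le_opNorm z)
  have h₁₁ := hinner z₁ z₁
  have h₁₂ := hinner z₁ z₂
  have h₂₁ := hinner z₂ z₁
  have hyoung : 2 * (‖X‖ * |τ|) * ‖e‖ ≤ ‖X‖ ^ 2 / δ * |τ| ^ 2 + δ * ‖e‖ ^ 2 := by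
    have hsq : 0 ≤ (δ * ‖e‖ - ‖X‖ * |τ|) ^ 2 / δ := by positivity
    have hexpand : (δ * ‖e‖ - ‖X‖ * |τ|) ^ 2 / δ =
        ‖X‖ ^ 2 / δ * |τ| ^ 2 + δ * ‖e‖ ^ 2 - 2 * (‖X‖ * |τ|) * ‖e‖ := by
      field_simp
      ring
    linarith
  rw [hnorm₁, hnorm₂] at *
  rw [hsum, spaceBlock_inner, ← hz₂, map_add, inner_add_left, inner_add_right, inner_add_right,
    ← sq_abs τ]
  linarith

lemma IsApproxSuperjet.isSuperjet (hA : A ≠ 0) (hδ : 0 < δ) {g : WithLp 2 (ℝ × E)}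
    {X : WithLp 2 (ℝ × E) →L[ℝ] WithLp 2 (ℝ × E)}
    (h : IsApproxSuperjet (u ∘ (timeScaling E hA).symm) (timeScaling E hA '' D) δ
      (timeScaling E hA z) g X) :
    IsSuperjet D u z (A * g.fst) g.snd (spaceBlock X + (4 * δ) • .id ℝ E) := by
  refine ⟨(1 / 2 * (‖X‖ + ‖X‖ ^ 2 / δ) + δ) * A ^ 2, ?_⟩
  have hcont : Continuous fun w => timeScaling E hA w - timeScaling E hA z := by fun_prop
  have htendsto : Tendsto (fun w => timeScaling E hA w - timeScaling E hA z) (𝓝[D] z) (𝓝 0) :=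
    (hcont.tendsto' z 0 (sub_self _)).mono_left nhdsWithin_le_nhds
  filter_upwards [htendsto.eventually h, self_mem_nhdsWithin] with w hw hwD
  rw [add_sub_cancel] at hw
  have hle := hw (mem_image_of_mem _ hwD)
  simp only [Function.comp_apply, ContinuousLinearEquiv.symm_apply_apply, norm_timeScaling_sub_sq,
    parabolicPenalty] at hle
  rw [← map_sub, timeScaling_apply, inner_eq_inner_fst_add_inner_snd] at hle
  have hblock := inner_le_spaceBlock_inner X hδ (A * (w.1 - z.1)) (w.2 - z.2)
  have hδsq := mul_nonneg hδ.le (sq_nonneg ‖w.2 - z.2‖)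
  simp only [RCLike.inner_apply, conj_trivial, Prod.fst_sub, Prod.snd_sub, WithLp.toLp_fst,
    WithLp.toLp_snd] at hle
  simp only [_root_.add_apply, _root_.smul_apply, ContinuousLinearMap.id_apply, inner_add_left,
    real_inner_smul_left, real_inner_self_eq_norm_sq]
  rw [mul_pow] at hblock
  linarith

omit [InnerProductSpace ℝ E] in
lemma abs_time_add_le (hA : 0 < A) {ζ ω ν : WithLp 2 (ℝ × E)} (hζ : ‖ζ - ν‖ ≤ δ)
    (hω : ‖ω + ν‖ ≤ δ) : |A * ζ.fst + A * ω.fst| ≤ A * (2 * δ) := by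
  have hnorm : ‖ζ + ω‖ ≤ 2 * δ := by
    rw [← sub_add_add_cancel ζ ω ν]
    exact (norm_add_le_of_le hζ hω).trans_eq (two_mul δ).symm
  have hfst := (WithLp.norm_fst_le ℝ (ζ + ω)).trans hnorm
  rw [WithLp.add_fst, Real.norm_eq_abs] at hfst
  rw [← mul_add, abs_mul, abs_of_pos hA]
  exact mul_le_mul_of_nonneg_left hfst hA.le

lemma spaceBlock_inner_add_le {X Y : WithLp 2 (ℝ × E) →L[ℝ] WithLp 2 (ℝ × E)}
    (hXY : ∀ h k, ⟪X h, h⟫ + ⟪Y k, k⟫ ≤ α * ‖h - k‖ ^ 2) (h k : E) :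
    ⟪(spaceBlock X + δ • .id ℝ E) h, h⟫ + ⟪(spaceBlock Y + δ • .id ℝ E) k, k⟫ ≤
      α * ‖h - k‖ ^ 2 + δ * (‖h‖ ^ 2 + ‖k‖ ^ 2) := by
  have hle := hXY (WithLp.toLp 2 (0, h)) (WithLp.toLp 2 (0, k))
  rw [← spaceBlock_inner, ← spaceBlock_inner, ← WithLp.toLp_sub, Prod.mk_sub_mk, sub_zero,
    WithLp.norm_toLp_snd] at hle
  simp only [_root_.add_apply, _root_.smul_apply, ContinuousLinearMap.id_apply, inner_add_left,
    real_inner_smul_left, real_inner_self_eq_norm_sq]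
  linarith

theorem exists_isDoubledJet [FiniteDimensional ℝ E] (hD : IsCompact D) (hne : D.Nonempty)
    (hu : UpperSemicontinuousOn u D) (hv : UpperSemicontinuousOn v D) (hα : 0 < α) (hδ : 0 < δ)
    (hA : 0 < A) :
    ∃ (q w : ℝ × E) (p₁ p₂ : ℝ) (r₁ r₂ : E) (X Y : E →L[ℝ] E),
      IsDoubledJet D u v α A δ q w p₁ p₂ r₁ r₂ X Y := by
  obtain ⟨e, he⟩ : ∃ e, e = timeScaling E hA.ne' := ⟨_, rfl⟩
  set δ' := δ / (4 + 2 * A)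
  have hδ' : δ' * (4 + 2 * A) = δ := div_mul_cancel₀ _ (by positivity)
  have hδ'0 : 0 < δ' := by positivity
  have hAδ' : 0 < A * δ' := by positivity
  have hnorm : ∀ q w, ‖e q - e w‖ ^ 2 = parabolicPenalty A q w :=
    he ▸ norm_timeScaling_sub_sq hA.ne'
  have hsnd : ∀ q w : ℝ × E, (e q - e w).snd = q.2 - w.2 := fun q w => by
    rw [← map_sub, he, timeScaling_apply]; rfl
  have hmaps : MapsTo e.symm (e '' D) D := by
    rintro _ ⟨q, hq, rfl⟩
    rwa [e.symm_apply_apply]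
  obtain ⟨_, ⟨q, hq, rfl⟩, _, ⟨w, hw, rfl⟩, ζ, ω, X, Y, hnear, hζ, hω, hX, hY, hXY⟩ :=
    exists_superjets_sum (hD.image e.continuous) (hne.image e)
      (hu.comp e.symm.continuous.continuousOn hmaps) (hv.comp e.symm.continuous.continuousOn hmaps)
      hα hδ'0
  refine ⟨q, w, A * ζ.fst, A * ω.fst, ζ.snd, ω.snd, _, _, hq, hw, fun q' hq' w' hw' => ?_,
    (abs_time_add_le hA hζ hω).trans (by linarith), ?_, ?_,
    IsApproxSuperjet.isSuperjet hA.ne' hδ'0 (he ▸ hX),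
    IsApproxSuperjet.isSuperjet hA.ne' hδ'0 (he ▸ hY),
    fun h k => (spaceBlock_inner_add_le hXY h k).trans ?_⟩
  · have hle := hnear _ (mem_image_of_mem e hq') _ (mem_image_of_mem e hw')
    simp only [Function.comp_apply, e.symm_apply_apply, hnorm] at hle
    linarith
  · rw [← hsnd]
    exact ((WithLp.norm_snd_le ℝ (ζ - α • (e q - e w))).trans hζ).trans (by linarith)
  · rw [← hsnd]
    exact ((WithLp.norm_snd_le ℝ (ω + α • (e q - e w))).trans hω).trans (by linarith)
  · gcongr
    linarith

end Parabolic

/-! ### Doubling of variables -/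

section ParabolicDoubling

lemma eventually_eventually_sub_lt {M : ℕ → ℕ → ℝ} {m τ : ℝ} (hleft : ∀ A, Antitone (M · A))
    (hright : ∀ j, Antitone (M j)) (hm : ∀ j A, m ≤ M j A) (hτ : 0 < τ) :
    ∀ᶠ j : ℕ in atTop, ∀ᶠ A : ℕ in atTop, M j A - M (2 * j) A < τ := by
  have hbdd : ∀ j, BddBelow (range (M j)) := fun j => ⟨m, forall_mem_range.2 (hm j)⟩
  have hlim : ∀ j, Tendsto (M j) atTop (𝓝 (⨅ A, M j A)) := fun j =>
    tendsto_atTop_ciInf (hright j) (hbdd j)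
  have hanti : Antitone fun j => ⨅ A, M j A := fun i j hij =>
    ciInf_mono (hbdd j) fun A => hleft A hij
  have hlim' : Tendsto (fun j => ⨅ A, M j A) atTop (𝓝 (⨅ j, ⨅ A, M j A)) :=
    tendsto_atTop_ciInf hanti ⟨m, forall_mem_range.2 fun j => le_ciInf (hm j)⟩
  have hdouble : Tendsto (fun j : ℕ => 2 * j) atTop atTop :=
    tendsto_id.const_mul_atTop' two_pos
  have hgap := hlim'.sub (hlim'.comp hdouble)
  rw [sub_self] at hgap
  filter_upwards [hgap.eventually_lt_const hτ] with j hj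
  exact ((hlim j).sub (hlim (2 * j))).eventually_lt_const hj

/-- Doubling the weight of the penalty lowers the penalized supremum by at least `j * P A z`, while
the suprema converge. -/
lemma eventually_eventually_forall_mul_le {Z : Type*} {S : Set Z} {Φ : Z → ℝ} {P : ℕ → Z → ℝ}
    {z₀ : Z} {τ : ℝ} (hΦ : BddAbove (Φ '' S)) (hP : Monotone P) (hP0 : ∀ A z, 0 ≤ P A z)
    (hz₀ : z₀ ∈ S) (hPz₀ : ∀ A, P A z₀ = 0) (hτ : 0 < τ) :
    ∀ᶠ j : ℕ in atTop, ∀ᶠ A : ℕ in atTop, ∀ z ∈ S, ∀ δ : ℝ,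
      (∀ z' ∈ S, Φ z' - 2 * j * P A z' ≤ Φ z - 2 * j * P A z + δ) → j * P A z ≤ τ + δ := by
  obtain ⟨C, hC⟩ := hΦ
  set M : ℕ → ℕ → ℝ := fun j A => sSup ((fun z => Φ z - j * P A z) '' S)
  have hbdd : ∀ j A : ℕ, BddAbove ((fun z => Φ z - j * P A z) '' S) := fun j A =>
    ⟨C, forall_mem_image.2 fun z hz =>
      (sub_le_self _ (mul_nonneg j.cast_nonneg (hP0 A z))).trans (hC (mem_image_of_mem Φ hz))⟩
  have hle : ∀ (j A : ℕ), ∀ z ∈ S, Φ z - j * P A z ≤ M j A := fun j A z hz =>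
    le_csSup (hbdd j A) (mem_image_of_mem _ hz)
  have hmono : ∀ {j j' A A' : ℕ}, j ≤ j' → A ≤ A' → M j' A' ≤ M j A := fun {j j' A A'} hj hA =>
    csSup_le ⟨_, mem_image_of_mem _ hz₀⟩ <| forall_mem_image.2 fun z hz =>
      (sub_le_sub_left (mul_le_mul (Nat.cast_le.2 hj) (hP hA z) (hP0 A z) j'.cast_nonneg) _).trans
        (hle j A z hz)
  have hlower : ∀ j A, Φ z₀ ≤ M j A := fun j A => by simpa [hPz₀] using hle j A z₀ hz₀
  filter_upwards [eventually_eventually_sub_lt (M := M) (fun A _ _ hj => hmono hj le_rfl)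
    (fun j _ _ hA => hmono le_rfl hA) hlower hτ] with j hj
  filter_upwards [hj] with A hA z hz δ hnear
  have hdouble : M (2 * j) A ≤ Φ z - 2 * j * P A z + δ :=
    csSup_le ⟨_, mem_image_of_mem _ hz₀⟩ <| forall_mem_image.2 fun z' hz' => by
      simpa using hnear z' hz'
  linarith [hle j A z hz]

lemma upperSemicontinuousOn_fst_add_snd {Z : Type*} [TopologicalSpace Z] {D : Set Z} {u v : Z → ℝ}
    (hu : UpperSemicontinuousOn u D) (hv : UpperSemicontinuousOn v D) :
    UpperSemicontinuousOn (fun z : Z × Z => u z.1 + v z.2) (D ×ˢ D) :=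
  (hu.comp continuousOn_fst fun _ hz => hz.1).add (hv.comp continuousOn_snd fun _ hz => hz.2)

lemma exists_pos_forall_add_lt {Z : Type*} [MetricSpace Z] {D C : Set Z} {u v : Z → ℝ} {m : ℝ}
    (hD : IsCompact D) (hC : IsClosed C) (hu : UpperSemicontinuousOn u D)
    (hv : UpperSemicontinuousOn v D) (hm : ∀ z ∈ D ∩ C, u z + v z < m) :
    ∃ ρ > 0, ∀ q ∈ D, ∀ w ∈ D, (q ∈ C ∨ w ∈ C) → dist q w < ρ → u q + v w < m := by
  have hcompact : IsCompact ((D ×ˢ D ∩ (fun z : Z × Z => u z.1 + v z.2) ⁻¹' Ici m) ∩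
      (Prod.fst ⁻¹' C ∪ Prod.snd ⁻¹' C)) :=
    ((upperSemicontinuousOn_fst_add_snd hu hv).isCompact_inter_preimage_Ici (hD.prod hD)
      m).inter_right
      ((hC.preimage continuous_fst).union (hC.preimage continuous_snd))
  obtain ⟨ρ, hρ, hle⟩ := hcompact.exists_forall_le' continuous_dist.continuousOn (a := 0) <| by
    rintro ⟨q, w⟩ ⟨⟨⟨hq, -⟩, hqw⟩, hqwC⟩
    refine dist_pos.2 fun heq => ?_
    obtain rfl : q = w := heq
    exact (hm q ⟨hq, hqwC.elim id id⟩).not_ge hqw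
  refine ⟨ρ, hρ, fun q hq w hw hqw hdist => ?_⟩
  by_contra! hge
  exact hdist.not_ge (hle (q, w) ⟨⟨⟨hq, hw⟩, hge⟩, hqw⟩)

variable {E : Type*} [NormedAddCommGroup E]

lemma exists_pos_forall_norm_sub_le {F : Type*} [NormedAddCommGroup F] {I : Set ℝ} {B : Set E}
    {b : ℝ × E → F} {L ω : ℝ} (hI : IsCompact I) (hB : IsCompact B) (hb : ContinuousOn b (I ×ˢ B))
    (hL : ∀ t ∈ I, ∀ x ∈ B, ∀ y ∈ B, ‖b (t, x) - b (t, y)‖ ≤ L * ‖x - y‖) (hω : 0 < ω) :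
    ∃ ρ > 0, ∀ q ∈ I ×ˢ B, ∀ w ∈ I ×ˢ B, |q.1 - w.1| < ρ →
      ‖b q - b w‖ ≤ L * ‖q.2 - w.2‖ + ω := by
  obtain ⟨ρ, hρ, hunif⟩ := Metric.uniformContinuousOn_iff.1
    ((hI.prod hB).uniformContinuousOn_of_continuous hb) ω hω
  refine ⟨ρ, hρ, fun ⟨t, x⟩ ⟨ht, hx⟩ ⟨s, y⟩ ⟨hs, hy⟩ hts => ?_⟩
  have htime : ‖b (t, y) - b (s, y)‖ ≤ ω := by
    rw [← dist_eq_norm]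
    refine (hunif (t, y) ⟨ht, hy⟩ (s, y) ⟨hs, hy⟩ ?_).le
    rwa [Prod.dist_eq, dist_self, max_eq_left dist_nonneg]
  exact (norm_sub_le_norm_sub_add_norm_sub _ _ _).trans (add_le_add (hL t ht x hx y hy) htime)

lemma parabolicPenalty_nonneg (A : ℝ) (q w : ℝ × E) : 0 ≤ parabolicPenalty A q w := by
  unfold parabolicPenalty
  positivity

lemma parabolicPenalty_self (A : ℝ) (q : ℝ × E) : parabolicPenalty A q q = 0 := by
  simp [parabolicPenalty]

lemma monotone_parabolicPenalty :
    Monotone fun (A : ℕ) (z : (ℝ × E) × (ℝ × E)) => parabolicPenalty (A : ℝ) z.1 z.2 := by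
  intro A A' hA z
  simp only [parabolicPenalty]
  gcongr

lemma sq_time_le_parabolicPenalty (A : ℝ) (q w : ℝ × E) :
    A ^ 2 * (q.1 - w.1) ^ 2 ≤ parabolicPenalty A q w :=
  le_add_of_nonneg_right (sq_nonneg _)

lemma sq_space_le_parabolicPenalty (A : ℝ) (q w : ℝ × E) :
    ‖q.2 - w.2‖ ^ 2 ≤ parabolicPenalty A q w :=
  le_add_of_nonneg_left (by positivity)

lemma sq_dist_le_parabolicPenalty {A : ℝ} (hA : 1 ≤ A) (q w : ℝ × E) :
    dist q w ^ 2 ≤ parabolicPenalty A q w := by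
  rw [Prod.dist_eq, dist_eq_norm q.2]
  rcases max_choice (dist q.1 w.1) ‖q.2 - w.2‖ with h | h <;> rw [h]
  · rw [Real.dist_eq, sq_abs]
    exact (le_mul_of_one_le_left (sq_nonneg _) (one_le_pow₀ hA)).trans
      (sq_time_le_parabolicPenalty A q w)
  · exact sq_space_le_parabolicPenalty A q w

lemma IsNearMax.add_le {D : Set (ℝ × E)} {u v : ℝ × E → ℝ} {α A δ : ℝ} {q w z : ℝ × E}
    (h : IsNearMax D u v α A δ q w) (hα : 0 ≤ α) (hz : z ∈ D) : u z + v z ≤ u q + v w + δ := by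
  have hpen := mul_nonneg hα (parabolicPenalty_nonneg A q w)
  have hle := h z hz z hz
  rw [parabolicPenalty_self] at hle
  linarith

lemma IsNearMax.add_translate_le {D : Set (ℝ × E)} {u v : ℝ × E → ℝ} {α A δ : ℝ} {q w : ℝ × E}
    (h : IsNearMax D u v α A δ q w) {ξ : E} (hq : (q.1, q.2 + ξ) ∈ D) (hw : (w.1, w.2 + ξ) ∈ D) :
    u (q.1, q.2 + ξ) + v (w.1, w.2 + ξ) ≤ u q + v w + δ := by
  have hle := h _ hq _ hw
  simp only [parabolicPenalty, add_sub_add_right_eq_sub] at hle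
  linarith

lemma eventually_eventually_forall_isNearMax {D : Set (ℝ × E)} {u v : ℝ × E → ℝ} {τ ε : ℝ}
    (hD : IsCompact D) (hne : D.Nonempty) (hu : UpperSemicontinuousOn u D)
    (hv : UpperSemicontinuousOn v D) (hτ : 0 < τ) (hε : 0 < ε) :
    ∀ᶠ j : ℕ in atTop, 0 < j ∧ ∀ ρ > 0, ∀ᶠ A : ℕ in atTop, 0 < A ∧ ∀ q ∈ D, ∀ w ∈ D,
      IsNearMax D u v (4 * j) A τ q w →
        j * ‖q.2 - w.2‖ ^ 2 ≤ 2 * τ ∧ dist q w < ε ∧ |q.1 - w.1| < ρ := by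
  obtain ⟨z₀, hz₀⟩ := hne
  have hpenalty := eventually_eventually_forall_mul_le
    ((upperSemicontinuousOn_fst_add_snd hu hv).bddAbove_of_isCompact (hD.prod hD))
    monotone_parabolicPenalty (fun A z => parabolicPenalty_nonneg A z.1 z.2) (mk_mem_prod hz₀ hz₀)
    (fun A => parabolicPenalty_self A z₀) hτ
  have hlarge : ∀ {r : ℝ}, 0 < r → ∀ᶠ j : ℕ in atTop, 2 * τ < j * r := fun hr =>
    (tendsto_natCast_atTop_atTop.atTop_mul_const hr).eventually_gt_atTop _
  filter_upwards [hpenalty, eventually_gt_atTop 0, hlarge (sq_pos_of_pos hε)] with j hj hj0 hjε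
  refine ⟨hj0, fun ρ hρ => ?_⟩
  have hj1 : (1 : ℝ) ≤ j := Nat.one_le_cast.2 hj0
  filter_upwards [hj, eventually_gt_atTop 0, hlarge (sq_pos_of_pos hρ)] with A hA hA0 hAρ
  have hA1 : (1 : ℝ) ≤ A := Nat.one_le_cast.2 hA0
  refine ⟨hA0, fun q hq w hw hmax => ?_⟩
  have hpen : j * parabolicPenalty A q w ≤ 2 * τ :=
    (hA (q, w) ⟨hq, hw⟩ τ fun z hz => by linarith [hmax z.1 hz.1 z.2 hz.2]).trans_eq
      (two_mul τ).symm
  have hpen' : parabolicPenalty A q w ≤ 2 * τ :=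
    (le_mul_of_one_le_left (parabolicPenalty_nonneg _ _ _) hj1).trans hpen
  refine ⟨?_, lt_of_pow_lt_pow_left₀ 2 hε.le ?_, lt_of_pow_lt_pow_left₀ 2 hρ.le ?_⟩
  · exact (mul_le_mul_of_nonneg_left (sq_space_le_parabolicPenalty A q w) j.cast_nonneg).trans hpen
  · refine lt_of_mul_lt_mul_left (hpen.trans_lt hjε |>.trans_le' ?_) j.cast_nonneg
    gcongr
    exact sq_dist_le_parabolicPenalty hA1 q w
  · rw [sq_abs]
    refine lt_of_mul_lt_mul_left ((?_ : (A : ℝ) * (q.1 - w.1) ^ 2 ≤ 2 * τ).trans_lt hAρ)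
      A.cast_nonneg
    refine le_trans ?_ ((sq_time_le_parabolicPenalty A q w).trans hpen')
    gcongr
    exact le_self_pow₀ hA1 two_ne_zero

variable [InnerProductSpace ℝ E] {ι : Type*} [Fintype ι]

/-- The value at gradient `r` and Hessian `X` of the second order operator with drift `β` and
diffusion columns `S`. -/
def diffusionForm (β : E) (S : PiLp 2 fun _ : ι => E) (r : E) (X : E →L[ℝ] E) : ℝ :=
  ⟪β, r⟫ + 1 / 2 * ∑ j, ⟪X (S j), S j⟫

lemma diffusionForm_add_le {β β' d r₁ r₂ : E} {S S' : PiLp 2 fun _ : ι => E} {X Y : E →L[ℝ] E}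
    {α δ : ℝ} (hα : 0 ≤ α) (hr₁ : ‖r₁ - α • d‖ ≤ δ) (hr₂ : ‖r₂ + α • d‖ ≤ δ)
    (hXY : ∀ h k, ⟪X h, h⟫ + ⟪Y k, k⟫ ≤ α * ‖h - k‖ ^ 2 + δ * (‖h‖ ^ 2 + ‖k‖ ^ 2)) :
    diffusionForm β S r₁ X + diffusionForm β' S' r₂ Y ≤
      α * (‖β - β'‖ * ‖d‖) + α / 2 * ‖S - S'‖ ^ 2 +
        δ * (‖β‖ + ‖β'‖ + (‖S‖ ^ 2 + ‖S'‖ ^ 2) / 2) := by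
  have hsum : ∑ j, ⟪X (S j), S j⟫ + ∑ j, ⟪Y (S' j), S' j⟫ ≤
      α * ‖S - S'‖ ^ 2 + δ * (‖S‖ ^ 2 + ‖S'‖ ^ 2) := by
    simp only [PiLp.norm_sq_eq_of_L2, PiLp.sub_apply, Finset.mul_sum, ← Finset.sum_add_distrib]
    exact Finset.sum_le_sum fun j _ => hXY (S j) (S' j)
  have hdrift : ⟪β, r₁⟫ + ⟪β', r₂⟫ =
      α * ⟪β - β', d⟫ + ⟪β, r₁ - α • d⟫ + ⟪β', r₂ + α • d⟫ := by
    simp only [inner_sub_left, inner_sub_right, inner_add_right, real_inner_smul_right]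
    ring
  have hinner : ∀ {x y : E}, ‖y‖ ≤ δ → ⟪x, y⟫ ≤ ‖x‖ * δ := fun {x y} hy =>
    (real_inner_le_norm x y).trans (by gcongr)
  have hmain := mul_le_mul_of_nonneg_left (real_inner_le_norm (β - β') d) hα
  have h₁ : ⟪β, r₁ - α • d⟫ ≤ ‖β‖ * δ := hinner hr₁
  have h₂ : ⟪β', r₂ + α • d⟫ ≤ ‖β'‖ * δ := hinner hr₂
  unfold diffusionForm
  linarith

lemma diffusionForm_add_le_of_norm_sub_le {β β' d r₁ r₂ : E} {S S' : PiLp 2 fun _ : ι => E}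
    {X Y : E →L[ℝ] E} {α δ L ω C₁ C₂ : ℝ} (hα : 0 ≤ α) (hr₁ : ‖r₁ - α • d‖ ≤ δ)
    (hr₂ : ‖r₂ + α • d‖ ≤ δ)
    (hXY : ∀ h k, ⟪X h, h⟫ + ⟪Y k, k⟫ ≤ α * ‖h - k‖ ^ 2 + δ * (‖h‖ ^ 2 + ‖k‖ ^ 2))
    (hβ : ‖β - β'‖ ≤ L * ‖d‖ + ω) (hS : ‖S - S'‖ ≤ L * ‖d‖ + ω) (hβC : ‖β‖ ≤ C₁)
    (hβC' : ‖β'‖ ≤ C₁) (hSC : ‖S‖ ≤ C₂) (hSC' : ‖S'‖ ≤ C₂) :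
    diffusionForm β S r₁ X + diffusionForm β' S' r₂ Y ≤
      (1 / 2 + 2 * L ^ 2) * (α * ‖d‖ ^ 2) + 2 * (α * ω ^ 2) + δ * (2 * C₁ + C₂ ^ 2) := by
  refine (diffusionForm_add_le hα hr₁ hr₂ hXY).trans (add_le_add ?_ ?_)
  · set e := L * ‖d‖ + ω with he
    have hyoung : e * ‖d‖ + 1 / 2 * e ^ 2 ≤ (1 / 2 + 2 * L ^ 2) * ‖d‖ ^ 2 + 2 * ω ^ 2 := by
      have h₁ := sq_nonneg (e - ‖d‖)
      have h₂ := sq_nonneg (L * ‖d‖ - ω)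
      rw [he] at h₁ ⊢
      linarith
    have hdrift : ‖β - β'‖ * ‖d‖ ≤ e * ‖d‖ := by gcongr
    have hdiffusion : ‖S - S'‖ ^ 2 ≤ e ^ 2 := by gcongr
    calc α * (‖β - β'‖ * ‖d‖) + α / 2 * ‖S - S'‖ ^ 2
        ≤ α * (e * ‖d‖) + α / 2 * e ^ 2 := by gcongr
      _ = α * (e * ‖d‖ + 1 / 2 * e ^ 2) := by ring
      _ ≤ α * ((1 / 2 + 2 * L ^ 2) * ‖d‖ ^ 2 + 2 * ω ^ 2) := by gcongr
      _ = _ := by ring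
  · have hδ : 0 ≤ δ := (norm_nonneg _).trans hr₁
    have h₁ : ‖S‖ ^ 2 ≤ C₂ ^ 2 := by gcongr
    have h₂ : ‖S'‖ ^ 2 ≤ C₂ ^ 2 := by gcongr
    gcongr <;> linarith

lemma exists_isDoubledJet_close [FiniteDimensional ℝ E] {D : Set (ℝ × E)} {u v : ℝ × E → ℝ}
    {δ ε : ℝ} (hD : IsCompact D) (hne : D.Nonempty) (hu : UpperSemicontinuousOn u D)
    (hv : UpperSemicontinuousOn v D) (hδ : 0 < δ) (hε : 0 < ε) :
    ∃ α > 0, ∀ ρ > 0, ∃ (A : ℝ) (q w : ℝ × E) (p₁ p₂ : ℝ) (r₁ r₂ : E) (X Y : E →L[ℝ] E),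
      IsDoubledJet D u v α A δ q w p₁ p₂ r₁ r₂ X Y ∧
      α * ‖q.2 - w.2‖ ^ 2 ≤ 8 * δ ∧ dist q w < ε ∧ |q.1 - w.1| < ρ := by
  obtain ⟨j, hj, hjA⟩ := (eventually_eventually_forall_isNearMax hD hne hu hv hδ hε).exists
  have hα : (0 : ℝ) < 4 * j := by positivity
  refine ⟨4 * j, hα, fun ρ hρ => ?_⟩
  obtain ⟨A, hA0, hA⟩ := (hjA ρ hρ).exists
  obtain ⟨q, w, p₁, p₂, r₁, r₂, X, Y, hjet⟩ :=
    exists_isDoubledJet hD hne hu hv hα hδ (Nat.cast_pos.2 hA0)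
  obtain ⟨hspace, hdist, htime⟩ := hA q hjet.left_mem w hjet.right_mem hjet.isNearMax
  exact ⟨A, q, w, p₁, p₂, r₁, r₂, X, Y, hjet, by linarith, hdist, htime⟩

/-- Order of the choices: the tolerance `δ`, the weight `α`, the time modulus `ω` of the
coefficients (with `α * ω ^ 2` of order `ε`), and finally the time scale. -/
theorem exists_isSuperjet_doubling [FiniteDimensional ℝ E] {I : Set ℝ} {B : Set E}
    {C : Set (ℝ × E)} {u v : ℝ × E → ℝ} {b : ℝ × E → E} {S : ℝ × E → PiLp 2 fun _ : ι => E}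
    {L ε : ℝ} {z₀ : ℝ × E} (hI : IsCompact I) (hB : IsCompact B)
    (hu : UpperSemicontinuousOn u (I ×ˢ B)) (hv : UpperSemicontinuousOn v (I ×ˢ B))
    (hb : ContinuousOn b (I ×ˢ B)) (hS : ContinuousOn S (I ×ˢ B))
    (hbL : ∀ t ∈ I, ∀ x ∈ B, ∀ y ∈ B, ‖b (t, x) - b (t, y)‖ ≤ L * ‖x - y‖)
    (hSL : ∀ t ∈ I, ∀ x ∈ B, ∀ y ∈ B, ‖S (t, x) - S (t, y)‖ ≤ L * ‖x - y‖)
    (hC : IsClosed C) (hz₀ : z₀ ∈ I ×ˢ B)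
    (hlt : ∀ z ∈ (I ×ˢ B) ∩ C, u z + v z < u z₀ + v z₀ - ε) (hε : 0 < ε) :
    ∃ q ∈ (I ×ˢ B) \ C, ∃ w ∈ (I ×ˢ B) \ C, ∃ (p₁ p₂ : ℝ) (r₁ r₂ : E) (X Y : E →L[ℝ] E),
      dist q w < ε ∧ u z₀ + v z₀ - ε ≤ u q + v w ∧
      (∀ ξ, q.2 + ξ ∈ B → w.2 + ξ ∈ B → u (q.1, q.2 + ξ) + v (w.1, w.2 + ξ) ≤ u q + v w + ε) ∧
      IsSuperjet (I ×ˢ B) u q p₁ r₁ X ∧ IsSuperjet (I ×ˢ B) v w p₂ r₂ Y ∧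
      p₁ + p₂ + diffusionForm (b q) (S q) r₁ X + diffusionForm (b w) (S w) r₂ Y ≤ ε := by
  have hD : IsCompact (I ×ˢ B) := hI.prod hB
  obtain ⟨C₁, hC₁⟩ := hD.exists_bound_of_continuousOn hb
  obtain ⟨C₂, hC₂⟩ := hD.exists_bound_of_continuousOn hS
  obtain ⟨δ, ⟨hδε, hδc⟩, hδ0⟩ : ∃ δ, (δ ≤ ε ∧
      δ * (5 + 16 * L ^ 2 + (2 * C₁ + C₂ ^ 2)) ≤ ε / 2) ∧ 0 < δ :=
    (((eventually_le_nhds hε).and ((continuous_mul_const _).tendsto' 0 0 (zero_mul _)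
      |>.eventually_le_const (half_pos hε))).filter_mono nhdsWithin_le_nhds |>.and
        (self_mem_nhdsWithin : Ioi (0 : ℝ) ∈ 𝓝[>] 0)).exists
  obtain ⟨ρ₀, hρ₀, hgap⟩ := exists_pos_forall_add_lt hD hC hu hv hlt
  obtain ⟨α, hα, hαρ⟩ := exists_isDoubledJet_close hD ⟨z₀, hz₀⟩ hu hv hδ0 (lt_min hε hρ₀)
  set ω := √(ε / (4 * α))
  have hω : α * ω ^ 2 = ε / 4 := by
    rw [Real.sq_sqrt (by positivity)]
    field_simp
  obtain ⟨ρ₁, hρ₁, hbρ⟩ := exists_pos_forall_norm_sub_le (ω := ω) hI hB hb hbL (by positivity)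
  obtain ⟨ρ₂, hρ₂, hSρ⟩ := exists_pos_forall_norm_sub_le (ω := ω) hI hB hS hSL (by positivity)
  obtain ⟨A, q, w, p₁, p₂, r₁, r₂, X, Y, hjet, hspace, hdist, htime⟩ :=
    hαρ (min ρ₁ ρ₂) (lt_min hρ₁ hρ₂)
  obtain ⟨hdistε, hdistρ⟩ := lt_min_iff.1 hdist
  obtain ⟨htime₁, htime₂⟩ := lt_min_iff.1 htime
  have hq := hjet.left_mem
  have hw := hjet.right_mem
  have hnear : u z₀ + v z₀ - ε ≤ u q + v w := by linarith [hjet.isNearMax.add_le hα.le hz₀]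
  refine ⟨q, ⟨hq, fun hqC => (hgap q hq w hw (.inl hqC) hdistρ).not_ge hnear⟩, w,
    ⟨hw, fun hwC => (hgap q hq w hw (.inr hwC) hdistρ).not_ge hnear⟩, p₁, p₂, r₁, r₂, X, Y, hdistε,
    hnear, fun ξ hqξ hwξ => ?_, hjet.left, hjet.right, ?_⟩
  · linarith [hjet.isNearMax.add_translate_le ⟨hq.1, hqξ⟩ ⟨hw.1, hwξ⟩]
  · have hform := diffusionForm_add_le_of_norm_sub_le hα.le hjet.norm_left_le hjet.norm_right_le
      hjet.inner_add_le (hbρ q hq w hw htime₁) (hSρ q hq w hw htime₂) (hC₁ q hq) (hC₁ w hw)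
      (hC₂ q hq) (hC₂ w hw)
    have hspace' := mul_le_mul_of_nonneg_left hspace (by positivity : 0 ≤ 1 / 2 + 2 * L ^ 2)
    linarith [(abs_le.1 hjet.time_le).2]

end ParabolicDoubling

/-! ### Penalization at infinity -/

section JetComparison

variable {E : Type*} [NormedAddCommGroup E]

/-- Penalization of `u` at spatial infinity, used to compactify the maximization. -/
def penalized (β : ℝ) (u : ℝ × E → ℝ) (z : ℝ × E) : ℝ := u z - β * ‖z.2‖ ^ 2

lemma upperSemicontinuousOn_penalized {D : Set (ℝ × E)} {u : ℝ × E → ℝ}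
    (hu : UpperSemicontinuousOn u D) (β : ℝ) : UpperSemicontinuousOn (penalized β u) D := by
  have hcont : Continuous fun z : ℝ × E => -(β * ‖z.2‖ ^ 2) := by fun_prop
  change UpperSemicontinuousOn (fun z => u z - β * ‖z.2‖ ^ 2) D
  simpa only [← sub_eq_add_neg] using hu.add hcont.continuousOn.upperSemicontinuousOn

lemma mul_norm_sq_le_of_le_penalized_add {u v : ℝ × E → ℝ} {q w : ℝ × E} {β θ M : ℝ} (hβ : 0 ≤ β)
    (hθ : 0 ≤ θ) (hval : θ ≤ penalized β u q + penalized β v w) (hM : u q + v w ≤ M) :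
    θ ≤ u q + v w ∧ β * ‖q.2‖ ^ 2 ≤ M ∧ β * ‖w.2‖ ^ 2 ≤ M := by
  have hq : 0 ≤ β * ‖q.2‖ ^ 2 := by positivity
  have hw : 0 ≤ β * ‖w.2‖ ^ 2 := by positivity
  simp only [penalized] at hval
  refine ⟨?_, ?_, ?_⟩ <;> linarith

lemma mul_norm_le_sqrt {β M : ℝ} {x : E} (hβ : 0 ≤ β) (hx : β * ‖x‖ ^ 2 ≤ M) :
    β * ‖x‖ ≤ √(M * β) := by
  refine Real.le_sqrt_of_sq_le ?_
  rw [mul_pow, sq β, mul_assoc, mul_comm M]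
  exact mul_le_mul_of_nonneg_left hx hβ

lemma mul_norm_add_sq_le {β M κ : ℝ} {x ξ : E} (hβ : 0 ≤ β) (hx : β * ‖x‖ ^ 2 ≤ M)
    (hξ : ‖ξ‖ ≤ κ) : β * ‖x + ξ‖ ^ 2 ≤ β * ‖x‖ ^ 2 + (2 * κ * √(M * β) + κ ^ 2 * β) := by
  have hκ : 0 ≤ κ := (norm_nonneg ξ).trans hξ
  have hnorm : ‖x + ξ‖ ≤ ‖x‖ + κ := norm_add_le_of_le le_rfl hξ
  calc β * ‖x + ξ‖ ^ 2 ≤ β * (‖x‖ + κ) ^ 2 := by gcongr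
    _ = β * ‖x‖ ^ 2 + (2 * κ * (β * ‖x‖) + κ ^ 2 * β) := by ring
    _ ≤ _ := by gcongr; exact mul_norm_le_sqrt hβ hx

lemma eventually_mul_sqrt_add_mul_le (a c M : ℝ) {η : ℝ} (hη : 0 < η) :
    ∀ᶠ β in 𝓝[>] (0 : ℝ), a * √(M * β) + c * β ≤ η := by
  have hcont : Continuous fun β : ℝ => a * √(M * β) + c * β := by fun_prop
  exact (hcont.tendsto' 0 0 (by simp)).mono_left nhdsWithin_le_nhds |>.eventually_le_const hη

lemma nhdsWithin_strip_le {T R : ℝ} {z : ℝ × E} (hz : ‖z.2‖ < R) :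
    𝓝[Ico 0 T ×ˢ univ] z ≤ 𝓝[Icc 0 T ×ˢ Metric.closedBall 0 R] z := by
  refine nhdsWithin_le_iff.2 ?_
  have hnorm : ∀ᶠ w : ℝ × E in 𝓝 z, ‖w.2‖ < R :=
    continuous_snd.norm.continuousAt.eventually_lt continuousAt_const hz
  filter_upwards [hnorm.filter_mono nhdsWithin_le_nhds, self_mem_nhdsWithin] with w hw hwT
  exact ⟨Ico_subset_Icc_self hwT.1, mem_closedBall_zero_iff.2 hw.le⟩

/-- `b` is continuous and bounded by `C` on the strip `[0, T] × E`, and `L`-Lipschitz in space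
uniformly in time. -/
structure IsBoundedLipschitz {F : Type*} [NormedAddCommGroup F] (T L C : ℝ) (b : ℝ × E → F) :
    Prop where
  continuousOn : ContinuousOn b (Icc 0 T ×ˢ univ)
  norm_sub_le : ∀ t ∈ Icc 0 T, ∀ x y, ‖b (t, x) - b (t, y)‖ ≤ L * ‖x - y‖
  norm_le : ∀ z ∈ Icc 0 T ×ˢ univ, ‖b z‖ ≤ C

variable [InnerProductSpace ℝ E] {ι : Type*} [Fintype ι]

lemma IsSuperjet.of_penalized {s : Set (ℝ × E)} {u : ℝ × E → ℝ} {β p : ℝ} {z : ℝ × E} {r : E}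
    {X : E →L[ℝ] E} (h : IsSuperjet s (penalized β u) z p r X) :
    IsSuperjet s u z p (r + (2 * β) • z.2) (X + (2 * β) • .id ℝ E) := by
  obtain ⟨a, ha⟩ := h
  refine ⟨a, ha.mono fun w hw => ?_⟩
  have hsq := norm_add_sq_real z.2 (w.2 - z.2)
  rw [add_sub_cancel] at hsq
  simp only [penalized, hsq] at hw
  simp only [_root_.add_apply, _root_.smul_apply, ContinuousLinearMap.id_apply, inner_add_left,
    real_inner_smul_left, real_inner_self_eq_norm_sq]
  linarith

lemma IsSuperjet.mono_nhdsWithin {s s' : Set (ℝ × E)} {u : ℝ × E → ℝ} {p : ℝ} {z : ℝ × E} {r : E}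
    {X : E →L[ℝ] E} (h : IsSuperjet s u z p r X) (hs : 𝓝[s'] z ≤ 𝓝[s] z) :
    IsSuperjet s' u z p r X :=
  h.imp fun _ ha => ha.filter_mono hs

lemma IsSuperjet.const_mul_add {s : Set (ℝ × E)} {u : ℝ × E → ℝ} {p l : ℝ} {z : ℝ × E} {r : E}
    {X : E →L[ℝ] E} (h : IsSuperjet s u z p r X) (hl : 0 ≤ l) (C : ℝ) :
    IsSuperjet s (fun w => l * u w + C) z (l * p) (l • r) (l • X) := by
  obtain ⟨a, ha⟩ := h
  refine ⟨l * a, ha.mono fun w hw => ?_⟩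
  simp only [_root_.smul_apply, real_inner_smul_left]
  linarith [mul_le_mul_of_nonneg_left hw hl]

lemma diffusionForm_smul (β : E) (S : PiLp 2 fun _ : ι => E) (l : ℝ) (r : E) (X : E →L[ℝ] E) :
    diffusionForm β S (l • r) (l • X) = l * diffusionForm β S r X := by
  simp only [diffusionForm, _root_.smul_apply, real_inner_smul_left, real_inner_smul_right,
    ← Finset.mul_sum]
  ring

lemma diffusionForm_penalized_le {b x r : E} {S : PiLp 2 fun _ : ι => E} {X : E →L[ℝ] E}
    {β M C₁ C₂ : ℝ} (hβ : 0 ≤ β) (hx : β * ‖x‖ ^ 2 ≤ M) (hb : ‖b‖ ≤ C₁) (hS : ‖S‖ ≤ C₂) :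
    diffusionForm b S (r + (2 * β) • x) (X + (2 * β) • .id ℝ E) ≤
      diffusionForm b S r X + (2 * C₁ * √(M * β) + C₂ ^ 2 * β) := by
  have hC₁ : 0 ≤ C₁ := (norm_nonneg b).trans hb
  have hdrift : β * ⟪b, x⟫ ≤ C₁ * √(M * β) := by
    calc β * ⟪b, x⟫ ≤ β * (‖b‖ * ‖x‖) := by gcongr; exact real_inner_le_norm b x
      _ = ‖b‖ * (β * ‖x‖) := by ring
      _ ≤ C₁ * √(M * β) := by gcongr; exact mul_norm_le_sqrt hβ hx
  have hdiffusion : β * ‖S‖ ^ 2 ≤ C₂ ^ 2 * β := by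
    rw [mul_comm]
    gcongr
  rw [PiLp.norm_sq_eq_of_L2] at hdiffusion
  simp only [diffusionForm, _root_.add_apply, _root_.smul_apply, ContinuousLinearMap.id_apply,
    inner_add_left, inner_add_right, real_inner_smul_left, real_inner_smul_right,
    real_inner_self_eq_norm_sq, Finset.sum_add_distrib, ← Finset.mul_sum]
  linarith

lemma exists_penalization_weight (M κ C₁ C₂ ρ : ℝ) {δ η : ℝ} (hδ : 0 < δ) (hη : 0 < η) :
    ∃ β > 0, ρ * β ≤ δ ∧ 4 * κ * √(M * β) + 2 * κ ^ 2 * β ≤ η ∧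
      4 * C₁ * √(M * β) + 2 * C₂ ^ 2 * β ≤ η := by
  have hρ : ∀ᶠ β in 𝓝[>] (0 : ℝ), ρ * β ≤ δ := by
    simpa using eventually_mul_sqrt_add_mul_le 0 ρ M hδ
  obtain ⟨β, ⟨⟨hβρ, hβκ⟩, hβC⟩, hβ⟩ := ((hρ.and
    (eventually_mul_sqrt_add_mul_le (4 * κ) (2 * κ ^ 2) M hη)).and
    (eventually_mul_sqrt_add_mul_le (4 * C₁) (2 * C₂ ^ 2) M hη)).and self_mem_nhdsWithin |>.exists
  exact ⟨β, hβ, hβρ, hβκ, hβC⟩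

lemma exists_isSuperjet_penalized [FiniteDimensional ℝ E] {T L C₁ C₂ R β θ ε : ℝ}
    {u v : ℝ × E → ℝ} {b : ℝ × E → E} {S : ℝ × E → PiLp 2 fun _ : ι => E} {z₀ : ℝ × E}
    (hu : UpperSemicontinuousOn u (Icc 0 T ×ˢ univ))
    (hv : UpperSemicontinuousOn v (Icc 0 T ×ˢ univ))
    (hb : IsBoundedLipschitz T L C₁ b) (hS : IsBoundedLipschitz T L C₂ S)
    (hT : ∀ x, u (T, x) + v (T, x) ≤ 0) (hz₀ : z₀.1 ∈ Icc 0 T) (hR : ‖z₀.2‖ ≤ R) (hθ : 0 < θ)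
    (hβ : 0 ≤ β) (hε : 0 < ε) (hle : θ + ε ≤ penalized β u z₀ + penalized β v z₀) :
    ∃ q ∈ Ico 0 T ×ˢ Metric.closedBall (0 : E) R, ∃ w ∈ Ico 0 T ×ˢ Metric.closedBall (0 : E) R,
      ∃ (p₁ p₂ : ℝ) (r₁ r₂ : E) (X Y : E →L[ℝ] E), dist q w < ε ∧
      θ ≤ penalized β u q + penalized β v w ∧
      (∀ ξ, q.2 + ξ ∈ Metric.closedBall 0 R → w.2 + ξ ∈ Metric.closedBall 0 R →
        penalized β u (q.1, q.2 + ξ) + penalized β v (w.1, w.2 + ξ) ≤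
          penalized β u q + penalized β v w + ε) ∧
      IsSuperjet (Icc 0 T ×ˢ Metric.closedBall 0 R) (penalized β u) q p₁ r₁ X ∧
      IsSuperjet (Icc 0 T ×ˢ Metric.closedBall 0 R) (penalized β v) w p₂ r₂ Y ∧
      p₁ + p₂ + diffusionForm (b q) (S q) r₁ X + diffusionForm (b w) (S w) r₂ Y ≤ ε := by
  have hsub : Icc 0 T ×ˢ Metric.closedBall (0 : E) R ⊆ Icc 0 T ×ˢ univ :=
    prod_mono_right (subset_univ _)
  have hterminal : ∀ z ∈ (Icc 0 T ×ˢ Metric.closedBall (0 : E) R) ∩ {z | z.1 = T},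
      penalized β u z + penalized β v z < penalized β u z₀ + penalized β v z₀ - ε := by
    rintro ⟨t, x⟩ ⟨-, rfl : t = T⟩
    have hβx : 0 ≤ β * ‖x‖ ^ 2 := by positivity
    have := hT x
    simp only [penalized] at hle ⊢
    linarith
  have hIco : ∀ z ∈ (Icc 0 T ×ˢ Metric.closedBall (0 : E) R) \ {z | z.1 = T},
      z ∈ Ico 0 T ×ˢ Metric.closedBall (0 : E) R :=
    fun z hz => ⟨⟨hz.1.1.1, hz.1.1.2.lt_of_ne hz.2⟩, hz.1.2⟩
  obtain ⟨q, hq, w, hw, p₁, p₂, r₁, r₂, X, Y, hdist, hval, h⟩ :=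
    exists_isSuperjet_doubling (L := L) isCompact_Icc (isCompact_closedBall (0 : E) R)
      (upperSemicontinuousOn_penalized (hu.mono hsub) β)
      (upperSemicontinuousOn_penalized (hv.mono hsub) β)
      (hb.continuousOn.mono hsub) (hS.continuousOn.mono hsub)
      (fun t ht x _ y _ => hb.norm_sub_le t ht x y) (fun t ht x _ y _ => hS.norm_sub_le t ht x y)
      (isClosed_eq continuous_fst continuous_const) ⟨hz₀, mem_closedBall_zero_iff.2 hR⟩ hterminal hε
  exact ⟨q, hIco q hq, w, hIco w hw, p₁, p₂, r₁, r₂, X, Y, hdist, by linarith, h⟩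

/-- The radius `R` does not depend on `ε`, so that data which are continuous on the ball compare
uniformly at `q` and `w` as `ε → 0`. -/
theorem exists_forall_exists_isSuperjet [FiniteDimensional ℝ E] {T L C₁ C₂ M κ θ η : ℝ}
    {u v : ℝ × E → ℝ} {b : ℝ × E → E} {S : ℝ × E → PiLp 2 fun _ : ι => E} {z₀ : ℝ × E}
    (hu : UpperSemicontinuousOn u (Icc 0 T ×ˢ univ))
    (hv : UpperSemicontinuousOn v (Icc 0 T ×ˢ univ))
    (hb : IsBoundedLipschitz T L C₁ b) (hS : IsBoundedLipschitz T L C₂ S)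
    (hM : ∀ q ∈ Icc 0 T ×ˢ univ, ∀ w ∈ Icc 0 T ×ˢ univ, u q + v w ≤ M)
    (hT : ∀ x, u (T, x) + v (T, x) ≤ 0) (hz₀ : z₀.1 ∈ Icc 0 T) (hθ : 0 < θ)
    (hlt : θ < u z₀ + v z₀) (hη : 0 < η) :
    ∃ R, ∀ ε > 0, ∃ q ∈ Ico 0 T ×ˢ Metric.closedBall (0 : E) R,
      ∃ w ∈ Ico 0 T ×ˢ Metric.closedBall (0 : E) R,
      ∃ (p₁ p₂ : ℝ) (r₁ r₂ : E) (X Y : E →L[ℝ] E), dist q w < ε ∧ θ ≤ u q + v w ∧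
      (∀ ξ, ‖ξ‖ ≤ κ → u (q.1, q.2 + ξ) + v (w.1, w.2 + ξ) ≤ u q + v w + η) ∧
      IsSuperjet (Ico 0 T ×ˢ univ) u q p₁ r₁ X ∧ IsSuperjet (Ico 0 T ×ˢ univ) v w p₂ r₂ Y ∧
      p₁ + p₂ + diffusionForm (b q) (S q) r₁ X + diffusionForm (b w) (S w) r₂ Y ≤ η := by
  set γ := (u z₀ + v z₀ - θ) / 2 with hγ_def
  have hγ : 0 < γ := by linarith
  obtain ⟨β, hβ, hβz₀, hβκ, hβC⟩ :=
    exists_penalization_weight M κ C₁ C₂ (2 * ‖z₀.2‖ ^ 2) hγ (half_pos hη)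
  set R := √(M / β) + |κ| + 1 + ‖z₀.2‖ with hR
  refine ⟨R, fun ε hε => ?_⟩
  obtain ⟨ε', hε', hε'ε, hε'γ, hε'η⟩ : ∃ ε' > 0, ε' ≤ ε ∧ ε' ≤ γ ∧ ε' ≤ η / 2 :=
    ⟨min ε (min γ (η / 2)), by positivity, by simp, by simp, by simp⟩
  obtain ⟨q, hq, w, hw, p₁, p₂, r₁, r₂, X, Y, hdist, hval, htrans, hjetq, hjetw, hform⟩ :=
    exists_isSuperjet_penalized (z₀ := z₀) (R := R) hu hv hb hS hT hz₀
      (by rw [hR]; linarith [Real.sqrt_nonneg (M / β), abs_nonneg κ])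
      hθ hβ.le hε' (by simp only [penalized]; linarith)
  obtain ⟨hqw, hMq, hMw⟩ := mul_norm_sq_le_of_le_penalized_add hβ.le hθ.le hval
    (hM q ⟨Ico_subset_Icc_self hq.1, trivial⟩ w ⟨Ico_subset_Icc_self hw.1, trivial⟩)
  have hnorm : ∀ x : E, β * ‖x‖ ^ 2 ≤ M → ‖x‖ + |κ| < R := fun x hx => by
    have := Real.le_sqrt_of_sq_le ((le_div_iff₀' hβ).2 hx)
    linarith [norm_nonneg z₀.2]
  have hball : ∀ x : E, β * ‖x‖ ^ 2 ≤ M → ‖x‖ < R := fun x hx =>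
    (le_add_of_nonneg_right (abs_nonneg κ)).trans_lt (hnorm x hx)
  have hmem : ∀ x ξ : E, β * ‖x‖ ^ 2 ≤ M → ‖ξ‖ ≤ κ → x + ξ ∈ Metric.closedBall (0 : E) R :=
    fun x ξ hx hξ => mem_closedBall_zero_iff.2
      ((norm_add_le_of_le le_rfl (hξ.trans (le_abs_self κ))).trans (hnorm x hx).le)
  refine ⟨q, hq, w, hw, p₁, p₂, _, _, _, _, hdist.trans_le hε'ε, hqw, fun ξ hξ => ?_,
    hjetq.of_penalized.mono_nhdsWithin (nhdsWithin_strip_le (hball _ hMq)),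
    hjetw.of_penalized.mono_nhdsWithin (nhdsWithin_strip_le (hball _ hMw)), ?_⟩
  · have h := htrans ξ (hmem _ ξ hMq hξ) (hmem _ ξ hMw hξ)
    simp only [penalized] at h
    linarith [mul_norm_add_sq_le hβ.le hMq hξ, mul_norm_add_sq_le hβ.le hMw hξ]
  · have hqC := Ico_subset_Icc_self hq.1
    have hwC := Ico_subset_Icc_self hw.1
    linarith [diffusionForm_penalized_le (r := r₁) (X := X) hβ.le hMq (hb.norm_le q ⟨hqC, trivial⟩)
      (hS.norm_le q ⟨hqC, trivial⟩), diffusionForm_penalized_le (r := r₂) (X := Y) hβ.le hMw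
      (hb.norm_le w ⟨hwC, trivial⟩) (hS.norm_le w ⟨hwC, trivial⟩)]

end JetComparison

/-! ### Comparison in terms of superjets -/

section JetSolution

variable {E : Type*} [NormedAddCommGroup E] [InnerProductSpace ℝ E] {ι : Type*} [Fintype ι]
  {T L C₁ C₂ M κ : ℝ} {b : ℝ × E → E} {S : ℝ × E → PiLp 2 fun _ : ι => E} {F : ℝ × E → ℝ}
  {K : Set E} {ℓ : ℝ × E × E → ℝ} {U V W : ℝ × E → ℝ}

/-- Subsolution, in terms of superjets, of the quasi-variational inequality with drift `b`,
diffusion columns `S`, running payoff `F` and intervention cost `ℓ`. The second alternative says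
that `U z` is at most the supremum over `ξ ∈ K` of `U (z.1, z.2 + ξ) - ℓ (z.1, z.2, ξ)`. -/
def IsJetSubsolution (T : ℝ) (b : ℝ × E → E) (S : ℝ × E → PiLp 2 fun _ : ι => E) (F : ℝ × E → ℝ)
    (K : Set E) (ℓ : ℝ × E × E → ℝ) (U : ℝ × E → ℝ) : Prop :=
  ∀ z ∈ Ico 0 T ×ˢ univ, ∀ p r X, IsSuperjet (Ico 0 T ×ˢ univ) U z p r X →
    U z ≤ p + diffusionForm (b z) (S z) r X + F z ∨
      ∀ η > 0, ∃ ξ ∈ K, U z ≤ U (z.1, z.2 + ξ) - ℓ (z.1, z.2, ξ) + η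

/-- Supersolution, in terms of superjets of `-W`, of the quasi-variational inequality of
`IsJetSubsolution`, with slack `κ` in the intervention inequality. -/
def IsJetSupersolution (T : ℝ) (b : ℝ × E → E) (S : ℝ × E → PiLp 2 fun _ : ι => E)
    (F : ℝ × E → ℝ) (K : Set E) (ℓ : ℝ × E × E → ℝ) (κ : ℝ) (W : ℝ × E → ℝ) : Prop :=
  ∀ z ∈ Ico 0 T ×ˢ univ, ∀ p r X, IsSuperjet (Ico 0 T ×ˢ univ) (fun w => -W w) z p r X →
    -(p + diffusionForm (b z) (S z) r X) + F z ≤ W z ∧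
      ∀ ξ ∈ K, W (z.1, z.2 + ξ) - ℓ (z.1, z.2, ξ) + κ ≤ W z

omit [InnerProductSpace ℝ E] in
lemma exists_forall_dist_lt_le_add [ProperSpace E] (hF : ContinuousOn F (Icc 0 T ×ˢ univ))
    (hK : IsCompact K) (hℓ : ContinuousOn ℓ (Icc 0 T ×ˢ univ ×ˢ K)) (R : ℝ) {η : ℝ} (hη : 0 < η) :
    ∃ ε > 0, ∀ q ∈ Icc 0 T ×ˢ Metric.closedBall (0 : E) R,
      ∀ w ∈ Icc 0 T ×ˢ Metric.closedBall (0 : E) R, dist q w < ε →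
      F q ≤ F w + η ∧ ∀ ξ ∈ K, ℓ (w.1, w.2, ξ) ≤ ℓ (q.1, q.2, ξ) + η := by
  have hball := isCompact_closedBall (0 : E) R
  have hFu := (isCompact_Icc.prod hball).uniformContinuousOn_of_continuous
    (hF.mono (prod_mono_right (subset_univ _)))
  have hℓu := (isCompact_Icc.prod (hball.prod hK)).uniformContinuousOn_of_continuous
    (hℓ.mono (prod_mono_right (prod_mono_left (subset_univ _))))
  obtain ⟨ε₁, hε₁, hF'⟩ := Metric.uniformContinuousOn_iff.1 hFu η hη
  obtain ⟨ε₂, hε₂, hℓ'⟩ := Metric.uniformContinuousOn_iff.1 hℓu η hη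
  refine ⟨min ε₁ ε₂, lt_min hε₁ hε₂, fun q hq w hw hqw => ⟨?_, fun ξ hξ => ?_⟩⟩
  · have h := hF' q hq w hw (hqw.trans_le (min_le_left _ _))
    linarith [(abs_lt.1 h).2]
  · have hdist : dist (q.1, q.2, ξ) (w.1, w.2, ξ) < ε₂ := by
      simpa [Prod.dist_eq] using hqw.trans_le (min_le_right _ _)
    have h := hℓ' _ ⟨hq.1, hq.2, hξ⟩ _ ⟨hw.1, hw.2, hξ⟩ hdist
    linarith [(abs_lt.1 h).1]

/-- With positive slack the intervention alternative is impossible at a nearly maximal pair. -/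
theorem IsJetSubsolution.le_of_slack_pos [FiniteDimensional ℝ E]
    (hU : IsJetSubsolution T b S F K ℓ U) (hW : IsJetSupersolution T b S F K ℓ κ W) (hκ : 0 < κ)
    (hb : IsBoundedLipschitz T L C₁ b) (hS : IsBoundedLipschitz T L C₂ S)
    (hF : ContinuousOn F (Icc 0 T ×ˢ univ)) (hK : IsCompact K)
    (hℓ : ContinuousOn ℓ (Icc 0 T ×ˢ univ ×ˢ K))
    (hUusc : UpperSemicontinuousOn U (Icc 0 T ×ˢ univ))
    (hWlsc : LowerSemicontinuousOn W (Icc 0 T ×ˢ univ))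
    (hM : ∀ q ∈ Icc 0 T ×ˢ univ, ∀ w ∈ Icc 0 T ×ˢ univ, U q - W w ≤ M)
    (hT : ∀ x, U (T, x) ≤ W (T, x)) {z : ℝ × E} (hz : z.1 ∈ Icc 0 T) : U z ≤ W z := by
  by_contra! hlt
  set θ := (U z - W z) / 2 with hθ_def
  have hθ : 0 < θ := by linarith
  obtain ⟨η, hη, hηθ, hηκ⟩ : ∃ η > 0, 2 * η < θ ∧ 3 * η < κ :=
    ⟨min θ κ / 4, by positivity, by linarith [min_le_left θ κ], by linarith [min_le_right θ κ]⟩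
  obtain ⟨ρ, hρ⟩ := hK.isBounded.exists_norm_le
  obtain ⟨R, hR⟩ := exists_forall_exists_isSuperjet (κ := ρ) (v := fun w => -W w) hUusc hWlsc.neg
    hb hS (fun q hq w hw => (sub_eq_add_neg (U q) (W w)).symm.trans_le (hM q hq w hw))
    (fun x => by linarith [hT x]) hz hθ (by linarith) hη
  obtain ⟨ε, hε, hcont⟩ := exists_forall_dist_lt_le_add hF hK hℓ R hη
  obtain ⟨q, hq, w, hw, p₁, p₂, r₁, r₂, X, Y, hdist, hval, htrans, hjetq, hjetw, hform⟩ := hR ε hε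
  have hIcc : Ico 0 T ×ˢ Metric.closedBall (0 : E) R ⊆ Icc 0 T ×ˢ Metric.closedBall (0 : E) R :=
    prod_mono_left Ico_subset_Icc_self
  obtain ⟨hFqw, hℓqw⟩ := hcont q (hIcc hq) w (hIcc hw) hdist
  obtain ⟨hpde, hjump⟩ := hW w ⟨hw.1, trivial⟩ p₂ r₂ Y hjetw
  rcases hU q ⟨hq.1, trivial⟩ p₁ r₁ X hjetq with hsub | hsub
  · linarith
  · obtain ⟨ξ, hξ, hUξ⟩ := hsub η hη
    linarith [htrans ξ (hρ ξ hξ), hjump ξ hξ, hℓqw ξ hξ]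

/-- A convex combination with a large constant creates slack, because costs are bounded below. -/
lemma IsJetSupersolution.convex_comb_const (hV : IsJetSupersolution T b S F K ℓ 0 V) {l C k : ℝ}
    (hl : 0 ≤ l) (hl1 : l < 1) (hC : ∀ z ∈ Ico 0 T ×ˢ univ, F z ≤ C)
    (hk : ∀ z ∈ Ico 0 T ×ˢ univ, ∀ ξ ∈ K, k ≤ ℓ (z.1, z.2, ξ)) :
    IsJetSupersolution T b S F K ℓ (l * k) fun z => (1 - l) * V z + l * C := by
  intro z hz p r X hX
  have hl' : 0 < 1 - l := sub_pos.2 hl1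
  have hjet := hX.const_mul_add (inv_nonneg.2 hl'.le) ((1 - l)⁻¹ * (l * C))
  have hneg : (fun w => (1 - l)⁻¹ * -((1 - l) * V w + l * C) + (1 - l)⁻¹ * (l * C)) =
      fun w => -V w := by
    funext w
    field_simp
    ring
  rw [hneg] at hjet
  obtain ⟨hpde, hjump⟩ := hV z hz _ _ _ hjet
  refine ⟨?_, fun ξ hξ => ?_⟩
  · rw [diffusionForm_smul, ← mul_add] at hpde
    have hscale := mul_le_mul_of_nonneg_left hpde hl'.le
    have hcancel := mul_inv_cancel_left₀ hl'.ne' (p + diffusionForm (b z) (S z) r X)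
    linarith [mul_le_mul_of_nonneg_left (hC z hz) hl]
  · linarith [mul_le_mul_of_nonneg_left (hjump ξ hξ) hl'.le,
      mul_le_mul_of_nonneg_left (hk z hz ξ hξ) hl]

theorem IsJetSubsolution.le_of_isJetSupersolution [FiniteDimensional ℝ E] {C k : ℝ}
    (hU : IsJetSubsolution T b S F K ℓ U) (hV : IsJetSupersolution T b S F K ℓ 0 V)
    (hb : IsBoundedLipschitz T L C₁ b) (hS : IsBoundedLipschitz T L C₂ S)
    (hF : ContinuousOn F (Icc 0 T ×ˢ univ)) (hFC : ∀ z ∈ Ico 0 T ×ˢ univ, F z ≤ C)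
    (hK : IsCompact K) (hℓ : ContinuousOn ℓ (Icc 0 T ×ˢ univ ×ˢ K)) (hk : 0 < k)
    (hℓk : ∀ z ∈ Ico 0 T ×ˢ univ, ∀ ξ ∈ K, k ≤ ℓ (z.1, z.2, ξ))
    (hUusc : UpperSemicontinuousOn U (Icc 0 T ×ˢ univ))
    (hUC : ∀ z ∈ Icc 0 T ×ˢ univ, U z ≤ C)
    (hVlsc : LowerSemicontinuousOn V (Icc 0 T ×ˢ univ))
    (hVM : ∀ z ∈ Icc 0 T ×ˢ univ, M ≤ V z)
    (hT : ∀ x, U (T, x) ≤ V (T, x)) {z : ℝ × E} (hz : z.1 ∈ Icc 0 T) : U z ≤ V z := by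
  have hperturbed : ∀ l ∈ Ioo (0 : ℝ) 1, U z ≤ (1 - l) * V z + l * C := by
    intro l hl
    have hl' : 0 ≤ 1 - l := sub_nonneg.2 hl.2.le
    have hcont : Continuous fun s : ℝ => (1 - l) * s + l * C := by fun_prop
    have hmono : Monotone fun s : ℝ => (1 - l) * s + l * C := fun s s' h => by
      dsimp only
      gcongr
    refine hU.le_of_slack_pos (hV.convex_comb_const hl.1.le hl.2 hFC hℓk) (mul_pos hl.1 hk) hb hS
      hF hK hℓ hUusc (hcont.comp_lowerSemicontinuousOn hVlsc hmono)
      (fun q hq w hw => sub_le_sub (hUC q hq) (hmono (hVM w hw))) (fun x => ?_) hz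
    have hUT := hUC (T, x) ⟨right_mem_Icc.2 (hz.1.trans hz.2), trivial⟩
    linarith [mul_le_mul_of_nonneg_left (hT x) hl', mul_le_mul_of_nonneg_left hUT hl.1.le]
  have hlim : Tendsto (fun l : ℝ => (1 - l) * V z + l * C) (𝓝[>] 0) (𝓝 (V z)) := by
    have hcont : Continuous fun l : ℝ => (1 - l) * V z + l * C := by fun_prop
    exact (hcont.tendsto' 0 (V z) (by simp)).mono_left nhdsWithin_le_nhds
  exact ge_of_tendsto hlim (eventually_of_mem (Ioo_mem_nhdsGT one_pos) hperturbed)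

end JetSolution

/-! ### Test functions and equation (HJB1) -/

section TestFunction

variable {E : Type*} [NormedAddCommGroup E] [InnerProductSpace ℝ E]

lemma inner_selfAdjointPart_apply [CompleteSpace E] (X : E →L[ℝ] E) (x : E) :
    ⟪(selfAdjointPart ℝ X : E →L[ℝ] E) x, x⟫ = ⟪X x, x⟫ := by
  simp only [selfAdjointPart_apply_coe, invOf_eq_inv, _root_.smul_apply, _root_.add_apply,
    ContinuousLinearMap.star_eq_adjoint, real_inner_smul_left, inner_add_left,
    ContinuousLinearMap.adjoint_inner_left, real_inner_comm (X x) x]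
  ring

/-- The test function realizing a superjet: the expansion of `IsSuperjet` with base point `z` and
value `0` there. -/
def jetTest (z : ℝ × E) (p a : ℝ) (r : E) (X : E →L[ℝ] E) (t : ℝ) (x : E) : ℝ :=
  p * (t - z.1) + a * (t - z.1) ^ 2 + ⟪r, x - z.2⟫ + 1 / 2 * ⟪X (x - z.2), x - z.2⟫

lemma jetTest_self (z : ℝ × E) (p a : ℝ) (r : E) (X : E →L[ℝ] E) :
    jetTest z p a r X z.1 z.2 = 0 := by simp [jetTest]

lemma hasDerivAt_jetTest (z : ℝ × E) (p a : ℝ) (r : E) (X : E →L[ℝ] E) (t : ℝ) (x : E) :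
    HasDerivAt (fun s => jetTest z p a r X s x) (p + 2 * a * (t - z.1)) t := by
  have hsub : HasDerivAt (fun s => s - z.1) 1 t := (hasDerivAt_id t).sub_const z.1
  have h := (((hsub.const_mul p).add ((hsub.fun_pow 2).const_mul a)).add_const
    ⟪r, x - z.2⟫).add_const (1 / 2 * ⟪X (x - z.2), x - z.2⟫)
  refine h.congr_deriv ?_
  ring

lemma hasGradientAt_jetTest [CompleteSpace E] (z : ℝ × E) (p a : ℝ) (r : E) (X : E →L[ℝ] E)
    (t : ℝ) (x : E) :
    HasGradientAt (jetTest z p a r X t) (r + (selfAdjointPart ℝ X : E →L[ℝ] E) (x - z.2)) x := by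
  have hsub : HasFDerivAt (fun y : E => y - z.2) (.id ℝ E) x := (hasFDerivAt_id x).sub_const z.2
  have hX : HasFDerivAt (fun y : E => X (y - z.2)) X x := X.hasFDerivAt.comp x hsub
  have h := (((hasFDerivAt_const r x).inner ℝ hsub).const_add
    (p * (t - z.1) + a * (t - z.1) ^ 2)).add ((hX.inner ℝ hsub).const_mul (1 / 2))
  refine hasGradientAt_iff_hasFDerivAt.2 (h.congr_fderiv ?_)
  ext v
  simp [ContinuousLinearMap.star_eq_adjoint, ContinuousLinearMap.adjoint_inner_left,
    real_inner_comm (X v), fderivInnerCLM_apply, inner_sub_left, inner_sub_right]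
  ring

variable (z : ℝ × EucSp n) (p a : ℝ) (r : EucSp n) (X : EucSp n →L[ℝ] EucSp n)

lemma tderiv_jetTest (t : ℝ) (x : EucSp n) :
    tderiv (jetTest z p a r X) t x = p + 2 * a * (t - z.1) :=
  (hasDerivAt_jetTest z p a r X t x).deriv

lemma xgrad_jetTest (t : ℝ) (x : EucSp n) : xgrad (jetTest z p a r X) t x =
    r + (selfAdjointPart ℝ X : EucSp n →L[ℝ] EucSp n) (x - z.2) :=
  (hasGradientAt_jetTest z p a r X t x).gradient

lemma hasFDerivAt_xgrad_jetTest (t : ℝ) (x : EucSp n) :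
    HasFDerivAt (xgrad (jetTest z p a r X) t) (selfAdjointPart ℝ X : EucSp n →L[ℝ] EucSp n) x := by
  rw [funext (xgrad_jetTest z p a r X t)]
  exact ((ContinuousLinearMap.hasFDerivAt _).comp x ((hasFDerivAt_id x).sub_const z.2)).const_add r

lemma xhess_jetTest (t : ℝ) (x : EucSp n) : xhess (jetTest z p a r X) t x = .of fun i j =>
    (selfAdjointPart ℝ X : EucSp n →L[ℝ] EucSp n) (EuclideanSpace.single j 1) i := by
  funext i j
  rw [xhess, (hasFDerivAt_xgrad_jetTest z p a r X t x).fderiv, of_apply]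

lemma isC12On_jetTest (s : Set (ℝ × EucSp n)) : IsC12On (jetTest z p a r X) s where
  cont := by unfold jetTest; fun_prop
  diff_t := fun q _ => (hasDerivAt_jetTest z p a r X q.1 q.2).differentiableAt
  cont_t := by simp only [tderiv_jetTest]; fun_prop
  diff_x := fun q _ => (hasGradientAt_jetTest z p a r X q.1 q.2).differentiableAt
  diff_grad := fun q _ => (hasFDerivAt_xgrad_jetTest z p a r X q.1 q.2).differentiableAt
  cont_grad := by simp only [xgrad_jetTest]; fun_prop
  cont_hess := by simp only [xhess_jetTest]; exact continuousOn_const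

/-- The columns of a matrix, as a Euclidean family of Euclidean vectors. -/
def columns (A : Matrix (Fin n) (Fin d) ℝ) : PiLp 2 fun _ : Fin d => EucSp n :=
  WithLp.toLp 2 fun j => WithLp.toLp 2 fun i => A i j

lemma trace_mul_transpose_mul (A : Matrix (Fin n) (Fin d) ℝ) (Y : EucSp n →L[ℝ] EucSp n) :
    (A * Aᵀ * Matrix.of fun i j => Y (EuclideanSpace.single j 1) i).trace =
      ∑ j, ⟪Y (columns A j), columns A j⟫ := by
  have hY : ∀ j i, Y (columns A j) i = ∑ k, Y (EuclideanSpace.single k 1) i * A k j := by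
    intro j i
    conv_lhs => rw [← (EuclideanSpace.basisFun (Fin n) ℝ).sum_repr (columns A j)]
    simp [columns, mul_comm]
  rw [Matrix.mul_assoc, Matrix.trace_mul_comm, Matrix.mul_assoc]
  simp only [Matrix.trace, Matrix.diag_apply, Matrix.mul_apply, Matrix.transpose_apply,
    Matrix.of_apply, PiLp.inner_apply, hY]
  rfl

lemma Lop_jetTest (b : ℝ → EucSp n → EucSp n) (σ : ℝ → EucSp n → Matrix (Fin n) (Fin d) ℝ) :
    Lop b σ (jetTest z p a r X) z.1 z.2 =
      diffusionForm (b z.1 z.2) (columns (σ z.1 z.2)) r X := by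
  simp only [Lop, xgrad_jetTest, xhess_jetTest, trace_mul_transpose_mul,
    inner_selfAdjointPart_apply, sub_self, map_zero, add_zero, diffusionForm]

end TestFunction

section HJB

lemma norm_toLp_two_le_sum {ι E : Type*} [Fintype ι] [SeminormedAddCommGroup E] (v : ι → E) :
    ‖WithLp.toLp 2 v‖ ≤ ∑ i, ‖v i‖ := by
  have hsum : 0 ≤ ∑ i, ‖v i‖ := Finset.sum_nonneg fun i _ => norm_nonneg (v i)
  rw [← sq_le_sq₀ (norm_nonneg _) hsum, PiLp.norm_sq_eq_of_L2]
  exact Finset.sum_sq_le_sq_sum_of_nonneg fun i _ => norm_nonneg (v i)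

lemma norm_columns_le (A : Matrix (Fin n) (Fin d) ℝ) : ‖columns A‖ ≤ ∑ i, ∑ j, |A i j| := by
  rw [Finset.sum_comm]
  exact (norm_toLp_two_le_sum _).trans (Finset.sum_le_sum fun j _ => norm_toLp_two_le_sum _)

lemma continuous_columns : Continuous (columns : Matrix (Fin n) (Fin d) ℝ → _) := by
  unfold columns
  fun_prop

variable {T : ℝ} {b : ℝ → EucSp n → EucSp n} {σ : ℝ → EucSp n → Matrix (Fin n) (Fin d) ℝ}
  {f : ℝ → EucSp n → ℝ} {g : EucSp n → ℝ} {K : Set (EucSp n)} {c : ℝ → EucSp n → EucSp n → ℝ}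
  {U V : ℝ → EucSp n → ℝ}

lemma IsSubHJB1.isJetSubsolution (hU : IsSubHJB1 T b σ f g K c U) (hK : K.Nonempty) :
    IsJetSubsolution T (fun z => b z.1 z.2) (fun z => columns (σ z.1 z.2))
      (fun z => Real.exp z.1 * f z.1 z.2) K (fun z => Real.exp z.1 * c z.1 z.2.1 z.2.2)
      fun z => U z.1 z.2 := by
  rintro z hz p r X ⟨a, ha⟩
  have hmax : IsLocalMaxOn (fun w : ℝ × EucSp n => U w.1 w.2 - jetTest z p a r X w.1 w.2)
      (pdom T n) z := by
    refine ha.mono fun w hw => ?_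
    simp only [jetTest_self]
    simp only [jetTest]
    linarith
  have h := hU.1 z.1 z.2 hz _ (isC12On_jetTest z p a r X _) hmax
  rw [tderiv_jetTest, Lop_jetTest, sub_self] at h
  rcases min_le_iff.1 h with h | h
  · left
    linarith
  · right
    intro η hη
    obtain ⟨_, ⟨ξ, hξ, rfl⟩, hlt⟩ := exists_lt_of_lt_csSup (hK.image _)
      (show U z.1 z.2 - η < Mtop K c U z.1 z.2 by linarith)
    exact ⟨ξ, hξ, by linarith⟩

lemma IsSuperHJB1.isJetSupersolution (hV : IsSuperHJB1 T b σ f g K c V) {C k : ℝ}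
    (hVC : ∀ t ∈ Icc 0 T, ∀ x, V t x ≤ C)
    (hck : ∀ t ∈ Icc 0 T, ∀ x, ∀ ξ ∈ K, k ≤ c t x ξ) :
    IsJetSupersolution T (fun z => b z.1 z.2) (fun z => columns (σ z.1 z.2))
      (fun z => Real.exp z.1 * f z.1 z.2) K (fun z => Real.exp z.1 * c z.1 z.2.1 z.2.2) 0
      fun z => V z.1 z.2 := by
  rintro z hz p r X ⟨a, ha⟩
  have hmin : IsLocalMinOn
      (fun w : ℝ × EucSp n => V w.1 w.2 - jetTest z (-p) (-a) (-r) (-X) w.1 w.2)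
      (pdom T n) z := by
    refine ha.mono fun w hw => ?_
    simp only [jetTest_self]
    simp only [jetTest, _root_.neg_apply, inner_neg_left]
    linarith
  have h := le_min_iff.1 (hV.1 z.1 z.2 hz _ (isC12On_jetTest z (-p) (-a) (-r) (-X) _) hmin)
  rw [tderiv_jetTest, Lop_jetTest, sub_self] at h
  have hzT : z.1 ∈ Icc 0 T := Ico_subset_Icc_self hz.1
  have hbdd : BddAbove ((fun ξ => V z.1 (z.2 + ξ) - Real.exp z.1 * c z.1 z.2 ξ) '' K) := by
    refine ⟨C - Real.exp z.1 * k, ?_⟩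
    rintro _ ⟨ξ, hξ, rfl⟩
    dsimp only
    gcongr
    exacts [hVC _ hzT _, hck _ hzT _ ξ hξ]
  have hform : diffusionForm (b z.1 z.2) (columns (σ z.1 z.2)) (-r) (-X) =
      -diffusionForm (b z.1 z.2) (columns (σ z.1 z.2)) r X := by
    simpa using diffusionForm_smul (b z.1 z.2) (columns (σ z.1 z.2)) (-1) r X
  refine ⟨by linarith, fun ξ hξ => ?_⟩
  have hle : V z.1 (z.2 + ξ) - Real.exp z.1 * c z.1 z.2 ξ ≤ Mtop K c V z.1 z.2 :=
    le_csSup hbdd (mem_image_of_mem _ hξ)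
  linarith

lemma isBoundedLipschitz_columns {C L : ℝ}
    (hcont : ContinuousOn (fun z : ℝ × EucSp n => σ z.1 z.2) (Icc 0 T ×ˢ univ))
    (hbdd : ∀ t ∈ Icc 0 T, ∀ x i j, |σ t x i j| ≤ C)
    (hlip : ∀ t ∈ Icc 0 T, ∀ x x', ∑ i, ∑ j, |σ t x i j - σ t x' i j| ≤ L * ‖x - x'‖) :
    IsBoundedLipschitz T L (∑ _ : Fin n, ∑ _ : Fin d, C) fun z => columns (σ z.1 z.2) where
  continuousOn := continuous_columns.comp_continuousOn hcont
  norm_sub_le t ht x y := (norm_columns_le (σ t x - σ t y)).trans (hlip t ht x y)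
  norm_le z hz := (norm_columns_le _).trans
    (Finset.sum_le_sum fun i _ => Finset.sum_le_sum fun j _ => hbdd z.1 hz.1 z.2 i j)

theorem comparison_principle_HJB1_general
    (hb_cont : ContinuousOn (fun z : ℝ × EucSp n => b z.1 z.2) (Icc 0 T ×ˢ univ))
    (hσ_cont : ContinuousOn (fun z : ℝ × EucSp n => σ z.1 z.2) (Icc 0 T ×ˢ univ))
    (hb_bdd : ∃ C, ∀ t ∈ Icc 0 T, ∀ x, ‖b t x‖ ≤ C)
    (hσ_bdd : ∃ C, ∀ t ∈ Icc 0 T, ∀ x i j, |σ t x i j| ≤ C)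
    (hlip : ∃ L, ∀ t ∈ Icc 0 T, ∀ x x',
      ‖b t x - b t x'‖ + ∑ i, ∑ j, |σ t x i j - σ t x' i j| ≤ L * ‖x - x'‖)
    (hf_le : ∃ C, ∀ t ∈ Icc 0 T, ∀ x, f t x ≤ C)
    (hf_cont : ContinuousOn (fun z : ℝ × EucSp n => f z.1 z.2) (Icc 0 T ×ˢ univ))
    (hK : K.Nonempty) (hKcomp : IsCompact K)
    (hc_cont : ContinuousOn (fun z : ℝ × EucSp n × EucSp n => c z.1 z.2.1 z.2.2)
      (Icc 0 T ×ˢ univ ×ˢ K))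
    {k : ℝ} (hk : 0 < k) (hck : ∀ t ∈ Icc 0 T, ∀ x, ∀ ξ ∈ K, k ≤ c t x ξ)
    (hU_le : ∃ C, ∀ t ∈ Icc 0 T, ∀ x, U t x ≤ C)
    (hU_usc : UpperSemicontinuousOn (fun z : ℝ × EucSp n => U z.1 z.2) (Icc 0 T ×ˢ univ))
    (hU : IsSubHJB1 T b σ f g K c U)
    (hV_bdd : ∃ C, ∀ t ∈ Icc 0 T, ∀ x, |V t x| ≤ C)
    (hV_lsc : LowerSemicontinuousOn (fun z : ℝ × EucSp n => V z.1 z.2) (Icc 0 T ×ˢ univ))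
    (hV : IsSuperHJB1 T b σ f g K c V) :
    ∀ t ∈ Icc 0 T, ∀ x, U t x ≤ V t x := by
  obtain ⟨Cb, hCb⟩ := hb_bdd
  obtain ⟨Cσ, hCσ⟩ := hσ_bdd
  obtain ⟨L, hL⟩ := hlip
  obtain ⟨Cf, hCf⟩ := hf_le
  obtain ⟨CU, hCU⟩ := hU_le
  obtain ⟨CV, hCV⟩ := hV_bdd
  have hexp : ContinuousOn (fun z : ℝ × EucSp n => Real.exp z.1) (Icc 0 T ×ˢ univ) := by fun_prop
  have hdrift : IsBoundedLipschitz T L Cb fun z : ℝ × EucSp n => b z.1 z.2 :=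
    ⟨hb_cont, fun t ht x y => (le_add_of_nonneg_right (by positivity)).trans (hL t ht x y),
      fun z hz => hCb z.1 hz.1 z.2⟩
  have hdiffusion := isBoundedLipschitz_columns hσ_cont hCσ fun t ht x y =>
    (le_add_of_nonneg_left (norm_nonneg _)).trans (hL t ht x y)
  have hpayoff : ∀ z ∈ Ico 0 T ×ˢ (univ : Set (EucSp n)),
      Real.exp z.1 * f z.1 z.2 ≤ Real.exp T * |Cf| := fun z hz =>
    calc Real.exp z.1 * f z.1 z.2 ≤ Real.exp z.1 * |Cf| := by
          gcongr
          exact (hCf z.1 (Ico_subset_Icc_self hz.1) z.2).trans (le_abs_self Cf)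
      _ ≤ Real.exp T * |Cf| := by gcongr; exact hz.1.2.le
  have hcost : ∀ z ∈ Ico 0 T ×ˢ (univ : Set (EucSp n)), ∀ ξ ∈ K,
      k ≤ Real.exp z.1 * c z.1 z.2 ξ := fun z hz ξ hξ => by
    have hkc := hck z.1 (Ico_subset_Icc_self hz.1) z.2 ξ hξ
    exact hkc.trans (le_mul_of_one_le_left (hk.le.trans hkc) (Real.one_le_exp hz.1.1))
  intro t ht x
  exact (hU.isJetSubsolution hK).le_of_isJetSupersolution (z := (t, x))
    (hV.isJetSupersolution (fun t ht x => (abs_le.1 (hCV t ht x)).2) hck) hdrift hdiffusion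
    (hexp.mul hf_cont) (fun z hz => (hpayoff z hz).trans (le_max_left _ CU)) hKcomp
    (by fun_prop) hk hcost hU_usc
    (fun z hz => (hCU z.1 hz.1 z.2).trans (le_max_right _ _)) hV_lsc
    (fun z hz => (abs_le.1 (hCV z.1 hz.1 z.2)).1) (fun x => (hU.2 x).trans (hV.2 x)) ht

end HJB

/-- **Comparison principle** for equation (HJB1): a bounded usc viscosity subsolution is
dominated by a bounded lsc viscosity supersolution on `[0,T] × ℝⁿ`. -/
theorem comparison_principle_HJB1
    {n d : ℕ} (hn : 0 < n) (hd : 0 < d) (T : ℝ) (hT : 0 < T)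
    (b : ℝ → EucSp n → EucSp n) (σ : ℝ → EucSp n → Matrix (Fin n) (Fin d) ℝ)
    (f : ℝ → EucSp n → ℝ) (g : EucSp n → ℝ)
    (K : Set (EucSp n)) (c : ℝ → EucSp n → EucSp n → ℝ)
    -- (H1)
    (hb_cont : Continuous fun p : ℝ × EucSp n => b p.1 p.2)
    (hσ_cont : Continuous fun p : ℝ × EucSp n => σ p.1 p.2)
    (hb_bdd : ∃ C, ∀ t x, ‖b t x‖ ≤ C)
    (hσ_bdd : ∃ C, ∀ t x i j, |σ t x i j| ≤ C)
    (hlip : ∃ C > (0:ℝ), ∀ t ∈ Set.Icc (0:ℝ) T, ∀ x x' : EucSp n,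
      ‖b t x - b t x'‖ + (∑ i, ∑ j, |σ t x i j - σ t x' i j|) ≤ C * ‖x - x'‖)
    -- (H2)
    (hf_bdd : ∃ C, ∀ t x, |f t x| ≤ C)
    (hf_uc : UniformContinuousOn (fun p : ℝ × EucSp n => f p.1 p.2)
      (Set.Icc 0 T ×ˢ Set.univ))
    (hg_bdd : ∃ C, ∀ x, |g x| ≤ C)
    (hg_uc : UniformContinuous g)
    -- (H3)
    (hK : K.Nonempty) (hKcomp : IsCompact K)
    (hc_uc : UniformContinuousOn (fun p : ℝ × EucSp n × EucSp n => c p.1 p.2.1 p.2.2)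
      (Set.Icc 0 T ×ˢ Set.univ ×ˢ K))
    (k : ℝ) (hk : 0 < k) (hck : ∀ t x, ∀ ξ ∈ K, k ≤ c t x ξ)
    (hc_sub : ∀ t x, ∀ ξ₁ ∈ K, ∀ ξ₂ ∈ K, ξ₁ + ξ₂ ∈ K →
      c t x (ξ₁ + ξ₂) ≤ c t x ξ₁ + c t x ξ₂)
    -- the sub- and supersolutions
    (U V : ℝ → EucSp n → ℝ)
    (hU_bdd : ∃ C, ∀ t x, |U t x| ≤ C)
    (hU_usc : UpperSemicontinuousOn (fun p : ℝ × EucSp n => U p.1 p.2)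
      (Set.Icc 0 T ×ˢ Set.univ))
    (hU_sub : IsSubHJB1 T b σ f g K c U)
    (hV_bdd : ∃ C, ∀ t x, |V t x| ≤ C)
    (hV_lsc : LowerSemicontinuousOn (fun p : ℝ × EucSp n => V p.1 p.2)
      (Set.Icc 0 T ×ˢ Set.univ))
    (hV_sup : IsSuperHJB1 T b σ f g K c V) :
    ∀ t ∈ Set.Icc (0:ℝ) T, ∀ x, U t x ≤ V t x := by
  exact comparison_principle_HJB1_general hb_cont.continuousOn hσ_cont.continuousOn
    (hb_bdd.imp fun _ h t _ => h t) (hσ_bdd.imp fun _ h t _ => h t) (hlip.imp fun _ h => h.2)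
    (hf_bdd.imp fun _ h t _ x => (abs_le.1 (h t x)).2) hf_uc.continuousOn hK hKcomp
    hc_uc.continuousOn hk (fun t _ => hck t) (hU_bdd.imp fun _ h t _ x => (abs_le.1 (h t x)).2)
    hU_usc hU_sub (hV_bdd.imp fun _ h t _ => h t) hV_lsc hV_sup
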